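/- arXiv:2104.05455 — 2 statements merged into one kernel-verified Lean document; each statement's English description precedes it below -/
import Mathlib

section
/- Let K be a field of characteristic 0 and p a prime ideal of K[Y] such that the Krull dimension of K[Y]/p equals d > 0. Fix an integer ρ with 0 < ρ ≤ d and integers D_1,…,D_ρ ≥ 1, and let Q_{D_1}(Λ_1,Y),…,Q_{D_ρ}(Λ_ρ,Y) be the generic polynomials of degrees D_1,…,D_ρ in pairwise disjoint parameter tuples. Then there exists a Hilbert subset H of K^{N_{D_1}+…+N_{D_ρ}} such that for every (λ_1,…,λ_ρ) ∈ H, the ideal ⟨p, Q_{D_1}(λ_1,Y),…,Q_{D_ρ}(λ_ρ,Y)⟩ of K[Y] is prime and K[Y] modulo this ideal has Krull dimension d − ρ. -/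
open MvPolynomial

noncomputable section

/-- The rational function field `K(T)` with variables indexed by `ι`,
realized as the fraction field of the polynomial ring. -/
abbrev RatFuncField (K : Type) [Field K] (ι : Type) : Type := FractionRing (MvPolynomial ι K)

/-- `x ∈ K(T)` can be specialized at `t ∈ K^ι` with value `v`:
there is a representation `x = a/b` with `b(t) ≠ 0` and `v = a(t)/b(t)`. -/
def RatSpecializesTo (K : Type) [Field K] {ι : Type} (t : ι → K)
    (x : RatFuncField K ι) (v : K) : Prop :=
  ∃ a b : MvPolynomial ι K, MvPolynomial.eval t b ≠ 0 ∧
    algebraMap (MvPolynomial ι K) (RatFuncField K ι) b * x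
      = algebraMap (MvPolynomial ι K) (RatFuncField K ι) a ∧
    MvPolynomial.eval t b * v = MvPolynomial.eval t a

/-- `P ∈ K(T)[Y]` specializes at `t` (coefficientwise) to `q ∈ K[Y]`. -/
def PolySpecializesTo (K : Type) [Field K] {ι : Type} {s : ℕ} (t : ι → K)
    (P : MvPolynomial (Fin s) (RatFuncField K ι)) (q : MvPolynomial (Fin s) K) : Prop :=
  ∀ mono : Fin s →₀ ℕ, RatSpecializesTo K t (P.coeff mono) (q.coeff mono)

/-- `H` is a Hilbert subset of `K^ι`: the set of points where finitely many irreducible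
polynomials of `K(T)[Y]` specialize to irreducible polynomials of `K[Y]`, intersected
with a nonempty Zariski-open subset. -/
def IsHilbertSubset (K : Type) [Field K] (ι : Type) (H : Set (ι → K)) : Prop :=
  ∃ (s l n : ℕ) (p : Fin l → MvPolynomial (Fin s) (RatFuncField K ι))
    (g : Fin n → MvPolynomial ι K),
    (∀ i, Irreducible (p i)) ∧
    (∃ t : ι → K, ∃ j, MvPolynomial.eval t (g j) ≠ 0) ∧
    H = {t | (∃ j, MvPolynomial.eval t (g j) ≠ 0) ∧
      ∀ i, ∃ q : MvPolynomial (Fin s) K, PolySpecializesTo K t (p i) q ∧ Irreducible q}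

/-- A subset of `K^ι` is Zariski-dense iff for every nonzero polynomial `g` it contains a
point where `g` does not vanish. -/
def IsZariskiDense (K : Type) [Field K] {ι : Type} (S : Set (ι → K)) : Prop :=
  ∀ g : MvPolynomial ι K, g ≠ 0 → ∃ t ∈ S, MvPolynomial.eval t g ≠ 0

/-- A field is Hilbertian if all its Hilbert subsets (of all `K^r`, `r ≥ 1`) are
Zariski-dense. -/
def IsHilbertianField (K : Type) [Field K] : Prop :=
  ∀ r : ℕ, 0 < r → ∀ H : Set (Fin r → K), IsHilbertSubset K (Fin r) H → IsZariskiDense K H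

/-- The canonical ring homomorphism `K[T,Y] → K(T)[Y]`. -/
def extHom (K : Type) [Field K] (r s : ℕ) :
    MvPolynomial (Fin r ⊕ Fin s) K →+* MvPolynomial (Fin s) (RatFuncField K (Fin r)) :=
  MvPolynomial.eval₂Hom
    ((MvPolynomial.C).comp
      ((algebraMap (MvPolynomial (Fin r) K) (RatFuncField K (Fin r))).comp MvPolynomial.C))
    (Sum.elim
      (fun i => MvPolynomial.C
        (algebraMap (MvPolynomial (Fin r) K) (RatFuncField K (Fin r)) (MvPolynomial.X i)))
      (fun j => MvPolynomial.X j))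

/-- The specialization homomorphism `K[T,Y] → K[Y]`, `T ↦ t`. -/
def specHom (K : Type) [Field K] {r s : ℕ} (t : Fin r → K) :
    MvPolynomial (Fin r ⊕ Fin s) K →+* MvPolynomial (Fin s) K :=
  MvPolynomial.eval₂Hom MvPolynomial.C
    (Sum.elim (fun i => MvPolynomial.C (t i)) (fun j => MvPolynomial.X j))

/-- `L` is a separable extension of `F` in the general sense (equivalently, `L` is
linearly disjoint from the perfect closure of `F`, equivalently `L ⊗_F F̄` is reduced);
the extension is given by the ring homomorphism `f : F → L`. -/
def IsSepExtOfHom (F L : Type) [Field F] [CommRing L] (f : F →+* L) : Prop :=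
  letI : Algebra F L := f.toAlgebra
  IsReduced (TensorProduct F (AlgebraicClosure F) L)

/-- `Frac(A)` is a separable extension of `F` in the general sense. -/
def IsSepOverBase (F : Type) [Field F] (A : Type) [CommRing A] [Algebra F A] : Prop :=
  IsSepExtOfHom F (FractionRing A) ((algebraMap A (FractionRing A)).comp (algebraMap F A))

/-- The height of an ideal: the infimum over primes containing it of the lengths of
chains of primes below.  For a prime ideal this is the usual height. -/
def idealHeight {R : Type} [CommRing R] (I : Ideal R) : ℕ∞ :=
  ⨅ p : {q : PrimeSpectrum R // I ≤ q.asIdeal}, Order.height p.1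

/-- The monomials in `s` variables of total degree at most `D`. -/
def MonLE (s D : ℕ) : Type := {m : Fin s →₀ ℕ // m.degree ≤ D}

noncomputable instance (s D : ℕ) : Fintype (MonLE s D) :=
  (Finsupp.finite_of_degree_le D).fintype

/-- The generic polynomial of degree `D`, with parameter variables `v m`, `m` a monomial of
degree at most `D`, as an element of `K[Λ][Y]`. -/
def genPoly (K : Type) [Field K] (s D : ℕ) {Λ : Type} (v : MonLE s D → Λ) :
    MvPolynomial (Fin s) (MvPolynomial Λ K) :=
  ∑ m : MonLE s D, MvPolynomial.monomial m.1 (MvPolynomial.X (v m))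

/-- The generic polynomial of degree `D` specialized at `lam ∈ K^{N_D}`. -/
def genPolyAt (K : Type) [Field K] (s D : ℕ) (lam : MonLE s D → K) :
    MvPolynomial (Fin s) K :=
  ∑ m : MonLE s D, MvPolynomial.monomial m.1 (lam m)

/-- Substitution `T_i ↦ U_i(Y)` as a ring homomorphism `K[T,Y] → K[Y]`. -/
def polySubstHom (K : Type) [Field K] {r s : ℕ} (U : Fin r → MvPolynomial (Fin s) K) :
    MvPolynomial (Fin r ⊕ Fin s) K →+* MvPolynomial (Fin s) K :=
  MvPolynomial.eval₂Hom MvPolynomial.C (Sum.elim U (fun j => MvPolynomial.X j))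

/-- The quasi-generic polynomial `Q_{S,R}(Λ,Y) = ∑_i Λ_i Q_i(Y) + R(Y)` of base `(S,R)`,
where `S = {monomial (m 0), …, monomial (m n)}`, as an element of `K[Λ][Y]`. -/
def quasiGen (K : Type) [Field K] {s n : ℕ} (m : Fin (n + 1) → (Fin s →₀ ℕ))
    (R : MvPolynomial (Fin s) K) :
    MvPolynomial (Fin s) (MvPolynomial (Fin (n + 1)) K) :=
  (∑ i, MvPolynomial.monomial (m i) (MvPolynomial.X i)) +
    MvPolynomial.map (MvPolynomial.C) R

/-- Hypothesis (H) for the triple `(p, S, R)` (with `S` the set of monomials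
`monomial (m i)`, `m 0 = 0`): the map `φ_{S,R}` sending `(a_1,…,a_n)` to the class mod `E`
of `∑_{i ≥ 1} a_i Q_i(Y) + R(Y)` in `B/E` is not identically zero, where `B = K[Y]/p` and
`E ⊆ B` is the subfield of elements algebraic over `K`. -/
def HypothesisH (K : Type) [Field K] {s n : ℕ} (p : Ideal (MvPolynomial (Fin s) K))
    (m : Fin (n + 1) → (Fin s →₀ ℕ)) (R : MvPolynomial (Fin s) K) : Prop :=
  ∃ a : Fin (n + 1) → K,
    Ideal.Quotient.mk p ((∑ i ∈ Finset.univ.erase 0, MvPolynomial.monomial (m i) (a i)) + R)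
      ∉ integralClosure K (MvPolynomial (Fin s) K ⧸ p)


/-- The index type of the parameters `ΛΛ = (Λ_1,…,Λ_ρ)` of `ρ` generic polynomials of
degrees `D 1, …, D ρ` in `s` variables (the tuples being pairwise disjoint); a point of
`K^{N_{D_1}+…+N_{D_ρ}}` is a function on this type. -/
def LamIdx (s ρ : ℕ) (D : Fin ρ → ℕ) : Type := (i : Fin ρ) × MonLE s (D i)

/-!
Let `A` be a domain of finite type over `K[T]` with `K[T] → A` injective, and `S = K[T, x]` for a
transcendence basis `x` of `A` over `K[T]`. By the primitive element theorem `A` is `S[θ]`, up to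
inverting some `g ∈ S`, with `θ` integral over `S`. If `t` keeps the minimal polynomial of `θ`
irreducible, the fibre of `S[θ]` at `t` is a domain. The fibre of `A` at `t` embeds into its
localization at `g` as soon as `g` is a nonzerodivisor on it, which holds for `t` in a nonempty open
set. So the fibres of `A` are domains over a Hilbert subset.

Now let `B = K[Y]/p`. The linear system `∑ₘ λᵢₘ m(Y) = 0` can be solved for the parameters of the
monomials `m = 1`, so `B[Λ']`, with `Λ'` the other parameters, is the coordinate ring of the
incidence variety of pairs `(λ, y)`, and its fibre over `λ` is `B` modulo the specialized generic
polynomials. The projection to the `λ`-space is dominant: specializing `Λ'` suitably, the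
polynomials become `ρ` coordinate functions on `B`, and these can be chosen algebraically
independent since `ρ ≤ d`.
-/

open scoped nonZeroDivisors

section LeadingCoefficients

variable {B : Type*} [CommRing B] {I : Ideal (Polynomial B)} {J : Ideal B}

theorem exists_mem_mul_coeff_eq_of_mem_mul_leadingCoeffNth {k : ℕ} {c : B}
    (hc : c ∈ J * I.leadingCoeffNth k) :
    ∃ q ∈ J.map Polynomial.C * I, q.degree ≤ k ∧ q.coeff k = c := by
  refine Submodule.mul_induction_on hc ?_ ?_
  · rintro a ha _ ⟨p, ⟨hpk, hpI⟩, rfl⟩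
    exact ⟨Polynomial.C a * p, Ideal.mul_mem_mul (Ideal.mem_map_of_mem _ ha) hpI,
      (Polynomial.C_mul' a p ▸ Polynomial.degree_smul_le a p).trans (Polynomial.mem_degreeLE.1 hpk),
      Polynomial.coeff_C_mul p⟩
  · rintro _ _ ⟨p, hp, hpk, rfl⟩ ⟨q, hq, hqk, rfl⟩
    exact ⟨p + q, add_mem hp hq, Polynomial.degree_add_le_of_le hpk hqk |>.trans_eq (max_self _),
      Polynomial.coeff_add p q k⟩

theorem inf_map_C_le_mul_of_leadingCoeffNth
    (h : ∀ k, I.leadingCoeffNth k ⊓ J ≤ J * I.leadingCoeffNth k) :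
    I ⊓ J.map Polynomial.C ≤ J.map Polynomial.C * I := by
  suffices ∀ (k : ℕ) (p : Polynomial B), p.degree < k → p ∈ I ⊓ J.map Polynomial.C →
      p ∈ J.map Polynomial.C * I from fun p =>
    this (p.natDegree + 1) p (p.degree_le_natDegree.trans_lt (by exact_mod_cast Nat.lt_succ_self _))
  intro k
  induction k with
  | zero =>
    intro p hp _
    rw [Polynomial.degree_eq_bot.1 (Nat.WithBot.lt_zero_iff.1 hp)]
    exact zero_mem _
  | succ k ih =>
    rintro p hpk ⟨hpI, hpJ⟩
    replace hpk : p.degree ≤ k := Order.le_of_lt_succ hpk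
    have hcoeff : p.coeff k ∈ I.leadingCoeffNth k ⊓ J :=
      ⟨⟨p, ⟨Polynomial.mem_degreeLE.2 hpk, hpI⟩, rfl⟩, Ideal.mem_map_C_iff.1 hpJ k⟩
    obtain ⟨q, hq, hqk, hqp⟩ := exists_mem_mul_coeff_eq_of_mem_mul_leadingCoeffNth (h k hcoeff)
    have hdeg : (p - q).degree < k := by
      refine (Polynomial.degree_lt_iff_coeff_zero _ _).2 fun m hm => ?_
      obtain rfl | hm := hm.eq_or_lt
      · rw [Polynomial.coeff_sub, hqp, sub_self]
      · exact Polynomial.coeff_eq_zero_of_degree_lt <|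
          (Polynomial.degree_sub_le_of_le hpk hqk).trans_lt (by simpa using hm)
    have hpq : p - q ∈ J.map Polynomial.C * I :=
      ih (p - q) hdeg (sub_mem ⟨hpI, hpJ⟩ ⟨Ideal.mul_le_right hq, Ideal.mul_le_left hq⟩)
    simpa only [sub_add_cancel] using add_mem hpq hq

end LeadingCoefficients

section GenericTransversality

/-- `B` is generically transversal over `R` if, for every ideal `I` of `B`, the fibres `B / 𝔪B` over
a nonempty basic open set `D(f)` satisfy `I ∩ 𝔪B = 𝔪I`. For flat `B` this says that
`Tor₁ᴿ(B / I, R / 𝔪) = 0`; the membership of `𝔪` in `D(f)` is expressed as `f` being a unit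
modulo `𝔪`. -/
def GenericallyTransversal (R B : Type*) [CommRing R] [CommRing B] [Algebra R B] : Prop :=
  ∀ I : Ideal B, ∃ f : R, f ≠ 0 ∧ ∀ 𝔪 : Ideal R, IsUnit (Ideal.Quotient.mk 𝔪 f) →
    I ⊓ 𝔪.map (algebraMap R B) ≤ 𝔪.map (algebraMap R B) * I

namespace GenericallyTransversal

protected theorem self (R : Type*) [CommRing R] [Nontrivial R] : GenericallyTransversal R R := by
  intro I
  obtain rfl | hI := eq_or_ne I ⊥
  · exact ⟨1, one_ne_zero, fun 𝔪 _ => by simp⟩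
  obtain ⟨f, hfI, hf0⟩ := Submodule.exists_mem_ne_zero_of_ne_bot hI
  refine ⟨f, hf0, fun 𝔪 hf => ?_⟩
  obtain ⟨g, hg⟩ := Ideal.Quotient.mk_surjective (hf.unit⁻¹ : (R ⧸ 𝔪)ˣ).val
  have hfg : 1 - f * g ∈ 𝔪 := by
    rw [← Ideal.Quotient.eq, map_one, map_mul, hg, hf.mul_val_inv]
  have hI𝔪 : IsCoprime I 𝔪 :=
    Ideal.isCoprime_iff_exists.2 ⟨f * g, I.mul_mem_right g hfI, _, hfg, by ring⟩
  rw [Algebra.algebraMap_self, Ideal.map_id, ← Ideal.mul_eq_inf_of_isCoprime hI𝔪, mul_comm]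

theorem of_surjective {R B C : Type*} [CommRing R] [CommRing B] [Algebra R B] [CommRing C]
    [Algebra R C] (h : GenericallyTransversal R B) (φ : B →ₐ[R] C) (hφ : Function.Surjective φ) :
    GenericallyTransversal R C := by
  intro I
  obtain ⟨f, hf0, hf⟩ := h (I.comap φ)
  refine ⟨f, hf0, fun 𝔪 h𝔪 c hc => ?_⟩
  rw [← φ.comp_algebraMap, ← Ideal.map_map] at hc ⊢
  obtain ⟨b, hb, rfl⟩ := (Ideal.mem_map_iff_of_surjective _ hφ).1 hc.2
  have hφb := Ideal.mem_map_of_mem (φ : B →+* C) (hf 𝔪 h𝔪 ⟨hc.1, hb⟩)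
  rw [Ideal.map_mul] at hφb
  exact Ideal.mul_mono_right Ideal.map_comap_le hφb

/-- The leading coefficient ideals of an ideal of `B[X]` stabilise, so only finitely many conditions
on the base are needed. -/
theorem polynomial {R B : Type*} [CommRing R] [IsDomain R] [CommRing B] [IsNoetherianRing B]
    [Algebra R B] (h : GenericallyTransversal R B) : GenericallyTransversal R (Polynomial B) := by
  intro I
  obtain ⟨N, hN⟩ := monotone_stabilizes_iff_noetherian.2 ‹IsNoetherianRing B›
    ⟨I.leadingCoeffNth, fun _ _ => I.leadingCoeffNth_mono⟩
  choose f hf0 hf using fun k => h (I.leadingCoeffNth k)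
  refine ⟨∏ k ∈ Finset.range (N + 1), f k, Finset.prod_ne_zero_iff.2 fun k _ => hf0 k,
    fun 𝔪 h𝔪 => ?_⟩
  have hunit (k : ℕ) (hk : k ≤ N) : IsUnit (Ideal.Quotient.mk 𝔪 (f k)) :=
    isUnit_of_dvd_unit (map_dvd _ (Finset.dvd_prod_of_mem f (Finset.mem_range_succ_iff.2 hk))) h𝔪
  rw [IsScalarTower.algebraMap_eq R B (Polynomial B), Polynomial.algebraMap_eq, ← Ideal.map_map]
  refine inf_map_C_le_mul_of_leadingCoeffNth fun k => ?_
  obtain hk | hk := le_total k N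
  · exact hf k 𝔪 (hunit k hk)
  · rw [← show I.leadingCoeffNth N = I.leadingCoeffNth k from hN k hk]
    exact hf N 𝔪 (hunit N le_rfl)

theorem mvPolynomial_fin (R : Type*) [CommRing R] [IsDomain R] [IsNoetherianRing R] (n : ℕ) :
    GenericallyTransversal R (MvPolynomial (Fin n) R) := by
  induction n with
  | zero =>
    exact (GenericallyTransversal.self R).of_surjective (isEmptyAlgEquiv R (Fin 0)).symm.toAlgHom
      (AlgEquiv.surjective _)
  | succ n ih =>
    exact ih.polynomial.of_surjective (finSuccEquiv R n).symm.toAlgHom (AlgEquiv.surjective _)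

theorem of_finiteType (R B : Type*) [CommRing R] [IsDomain R] [IsNoetherianRing R] [CommRing B]
    [Algebra R B] [Algebra.FiniteType R B] : GenericallyTransversal R B := by
  obtain ⟨n, φ, hφ⟩ := Algebra.FiniteType.iff_quotient_mvPolynomial''.1 ‹Algebra.FiniteType R B›
  exact (mvPolynomial_fin R n).of_surjective φ hφ

end GenericallyTransversal

theorem exists_ne_zero_forall_mem_map_of_mul_mem_map (R : Type*) {A : Type*} [CommRing R]
    [IsDomain R] [IsNoetherianRing R] [CommRing A] [IsDomain A] [Algebra R A]
    [Algebra.FiniteType R A] {g : A} (hg : g ≠ 0) :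
    ∃ f : R, f ≠ 0 ∧ ∀ 𝔪 : Ideal R, IsUnit (Ideal.Quotient.mk 𝔪 f) →
      ∀ a, g * a ∈ 𝔪.map (algebraMap R A) → a ∈ 𝔪.map (algebraMap R A) := by
  obtain ⟨f, hf0, hf⟩ := GenericallyTransversal.of_finiteType R A (Ideal.span {g})
  refine ⟨f, hf0, fun 𝔪 h𝔪 a ha => ?_⟩
  obtain ⟨b, hb, hba⟩ := Ideal.mem_mul_span_singleton.1
    (hf 𝔪 h𝔪 ⟨Ideal.mul_mem_right a _ (Ideal.mem_span_singleton_self g), ha⟩)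
  rwa [← mul_left_cancel₀ hg ((mul_comm g b).trans hba)]

end GenericTransversality

section BirationalSubring

variable {U A : Type*} [CommRing U] [CommRing A] [Algebra U A] {g : U} {𝔮 : Ideal U}

theorem exists_algebraMap_eq_pow_mul_of_mem_map
    (hg : ∀ a : A, ∃ (N : ℕ) (u : U), algebraMap U A u = algebraMap U A g ^ N * a) {a : A}
    (ha : a ∈ 𝔮.map (algebraMap U A)) :
    ∃ (N : ℕ), ∃ u ∈ 𝔮, algebraMap U A u = algebraMap U A g ^ N * a := by
  induction ha using Submodule.span_induction with
  | mem a ha =>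
    obtain ⟨u, hu, rfl⟩ := ha
    exact ⟨0, u, hu, by rw [pow_zero, one_mul]⟩
  | zero => exact ⟨0, 0, zero_mem _, by rw [map_zero, mul_zero]⟩
  | add a b _ _ iha ihb =>
    obtain ⟨M, u, hu, hua⟩ := iha
    obtain ⟨N, v, hv, hvb⟩ := ihb
    refine ⟨M + N, g ^ N * u + g ^ M * v,
      add_mem (Ideal.mul_mem_left _ _ hu) (Ideal.mul_mem_left _ _ hv), ?_⟩
    simp only [map_add, map_mul, map_pow, hua, hvb]
    ring
  | smul b a _ ih =>
    obtain ⟨M, u, hu, hua⟩ := ih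
    obtain ⟨N, v, hvb⟩ := hg b
    refine ⟨M + N, v * u, Ideal.mul_mem_left _ _ hu, ?_⟩
    simp only [map_mul, hua, hvb, smul_eq_mul]
    ring

theorem comap_map_algebraMap_eq_of_pow_mul_mem (hinj : Function.Injective (algebraMap U A))
    (hg : ∀ a : A, ∃ (N : ℕ) (u : U), algebraMap U A u = algebraMap U A g ^ N * a)
    [𝔮.IsPrime] (hg𝔮 : g ∉ 𝔮) : (𝔮.map (algebraMap U A)).comap (algebraMap U A) = 𝔮 := by
  refine le_antisymm (fun v hv => ?_) Ideal.le_comap_map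
  obtain ⟨N, u, hu, huv⟩ := exists_algebraMap_eq_pow_mul_of_mem_map hg hv
  rw [← map_pow, ← map_mul] at huv
  rw [hinj huv] at hu
  exact (Ideal.IsPrime.mem_or_mem ‹_› hu).resolve_left
    fun h => hg𝔮 (Ideal.IsPrime.mem_of_pow_mem ‹_› N h)

theorem isPrime_map_algebraMap_of_pow_mul_mem (hinj : Function.Injective (algebraMap U A))
    (hg : ∀ a : A, ∃ (N : ℕ) (u : U), algebraMap U A u = algebraMap U A g ^ N * a)
    [𝔮.IsPrime] (hg𝔮 : g ∉ 𝔮)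
    (hreg : ∀ a, algebraMap U A g * a ∈ 𝔮.map (algebraMap U A) → a ∈ 𝔮.map (algebraMap U A)) :
    (𝔮.map (algebraMap U A)).IsPrime := by
  have hcomap (u : U) : algebraMap U A u ∈ 𝔮.map (algebraMap U A) ↔ u ∈ 𝔮 := by
    rw [← Ideal.mem_comap, comap_map_algebraMap_eq_of_pow_mul_mem hinj hg hg𝔮]
  have hpow (N : ℕ) (a : A) (ha : algebraMap U A g ^ N * a ∈ 𝔮.map (algebraMap U A)) :
      a ∈ 𝔮.map (algebraMap U A) := by
    induction N with
    | zero => rwa [pow_zero, one_mul] at ha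
    | succ N ih => exact ih (hreg _ (by rwa [pow_succ', mul_assoc] at ha))
  refine ⟨fun htop => Ideal.IsPrime.ne_top ‹𝔮.IsPrime› ?_, fun {a b} hab => ?_⟩
  · rw [← comap_map_algebraMap_eq_of_pow_mul_mem hinj hg hg𝔮, htop, Ideal.comap_top]
  obtain ⟨M, u, hu⟩ := hg a
  obtain ⟨N, v, hv⟩ := hg b
  have huv : u * v ∈ 𝔮 := by
    rw [← hcomap, map_mul, hu, hv, mul_mul_mul_comm]
    exact Ideal.mul_mem_left _ _ hab
  refine (Ideal.IsPrime.mem_or_mem ‹_› huv).imp (fun h => hpow M a ?_) (fun h => hpow N b ?_)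
  · rwa [← hu, hcomap]
  · rwa [← hv, hcomap]

end BirationalSubring

section FibreOfAdjoin

variable {S S' : Type*} [CommRing S] [CommRing S'] {φ : S →+* S'}

theorem ker_adjoinRootMap_of_surjective (hφ : Function.Surjective φ) (P : Polynomial S) :
    RingHom.ker (AdjoinRoot.map φ P (P.map φ) dvd_rfl) =
      (RingHom.ker φ).map (AdjoinRoot.of P) := by
  refine le_antisymm (fun x hx => ?_) ?_
  · obtain ⟨f, rfl⟩ := AdjoinRoot.mk_surjective x
    obtain ⟨h', hh'⟩ : P.map φ ∣ f.map φ := by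
      rwa [RingHom.mem_ker, AdjoinRoot.map, AdjoinRoot.lift_mk, ← Polynomial.eval₂_map,
        ← AdjoinRoot.algebraMap_eq, ← Polynomial.aeval_def, AdjoinRoot.aeval_eq,
        AdjoinRoot.mk_eq_zero] at hx
    obtain ⟨h, rfl⟩ := Polynomial.map_surjective φ hφ h'
    have hker : f - P * h ∈ (RingHom.ker φ).map Polynomial.C := by
      rw [← Polynomial.ker_mapRingHom, RingHom.mem_ker, Polynomial.coe_mapRingHom,
        Polynomial.map_sub, hh', Polynomial.map_mul, sub_self]
    have hmk := Ideal.mem_map_of_mem (AdjoinRoot.mk P) hker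
    rwa [Ideal.map_map, map_sub, map_mul, AdjoinRoot.mk_self, zero_mul, sub_zero] at hmk
  · rw [Ideal.map_le_iff_le_comap]
    intro a ha
    rw [Ideal.mem_comap, RingHom.mem_ker, AdjoinRoot.map_of, RingHom.mem_ker.1 ha, map_zero]

theorem isPrime_map_adjoinRootOf_ker (hφ : Function.Surjective φ) {P : Polynomial S}
    (hPφ : Prime (P.map φ)) : ((RingHom.ker φ).map (AdjoinRoot.of P)).IsPrime := by
  have := AdjoinRoot.isDomain_of_prime hPφ
  rw [← ker_adjoinRootMap_of_surjective hφ]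
  exact RingHom.ker_isPrime _

theorem comap_map_adjoinRootOf_ker [IsDomain S'] (hφ : Function.Surjective φ) {P : Polynomial S}
    (hP : P.Monic) (hPφ : Prime (P.map φ)) :
    ((RingHom.ker φ).map (AdjoinRoot.of P)).comap (AdjoinRoot.of P) = RingHom.ker φ := by
  have hdeg : (P.map φ).degree ≠ 0 := fun h =>
    hPφ.ne_one ((hP.map φ).degree_le_zero_iff_eq_one.1 h.le)
  ext a
  rw [← ker_adjoinRootMap_of_surjective hφ, Ideal.mem_comap, RingHom.mem_ker, AdjoinRoot.map_of,
    map_eq_zero_iff _ (AdjoinRoot.of.injective_of_degree_ne_zero hdeg), RingHom.mem_ker]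

variable {A : Type*} [IsDomain S'] [IsDomain S] [IsIntegrallyClosed S] [CommRing A] [IsDomain A]
  [Algebra S A] [FaithfulSMul S A] {θ : A} {g : S}

theorem isPrime_and_comap_eq_of_prime_map_minpoly (hθ : IsIntegral S θ)
    (hg : ∀ a : A, ∃ N : ℕ, g ^ N • a ∈ Algebra.adjoin S {θ}) (hφ : Function.Surjective φ)
    (hprime : Prime ((minpoly S θ).map φ)) (hgφ : φ g ≠ 0)
    (hreg : ∀ a, algebraMap S A g * a ∈ (RingHom.ker φ).map (algebraMap S A) →
      a ∈ (RingHom.ker φ).map (algebraMap S A)) :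
    ((RingHom.ker φ).map (algebraMap S A)).IsPrime ∧
      ((RingHom.ker φ).map (algebraMap S A)).comap (algebraMap S A) = RingHom.ker φ := by
  let P := minpoly S θ
  let i : AdjoinRoot P →ₐ[S] A := (Algebra.adjoin S {θ}).val.comp (minpoly.equivAdjoin hθ).toAlgHom
  algebraize [i.toRingHom]
  have : IsScalarTower S (AdjoinRoot P) A := .of_algHom i
  have halg (a : S) : algebraMap S A a = algebraMap (AdjoinRoot P) A (AdjoinRoot.of P a) :=
    IsScalarTower.algebraMap_apply S (AdjoinRoot P) A a
  have hmap : (RingHom.ker φ).map (algebraMap S A) =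
      ((RingHom.ker φ).map (AdjoinRoot.of P)).map (algebraMap (AdjoinRoot P) A) := by
    rw [Ideal.map_map, ← AdjoinRoot.algebraMap_eq, ← IsScalarTower.algebraMap_eq]
  have hi : Function.Injective (algebraMap (AdjoinRoot P) A) :=
    Subtype.val_injective.comp (minpoly.equivAdjoin hθ).injective
  have hgi (a : A) : ∃ (N : ℕ) (u : AdjoinRoot P), algebraMap (AdjoinRoot P) A u =
      algebraMap (AdjoinRoot P) A (AdjoinRoot.of P g) ^ N * a := by
    obtain ⟨N, hN⟩ := hg a
    refine ⟨N, (minpoly.equivAdjoin hθ).symm ⟨_, hN⟩, ?_⟩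
    rw [← halg, ← map_pow, ← Algebra.smul_def]
    exact congrArg Subtype.val ((minpoly.equivAdjoin hθ).apply_symm_apply _)
  have := isPrime_map_adjoinRootOf_ker hφ hprime
  have hcomap := comap_map_adjoinRootOf_ker hφ (minpoly.monic hθ) hprime
  have hgP : AdjoinRoot.of P g ∉ (RingHom.ker φ).map (AdjoinRoot.of P) := by
    rwa [← Ideal.mem_comap, hcomap, RingHom.mem_ker]
  simp only [hmap, halg] at hreg ⊢
  refine ⟨isPrime_map_algebraMap_of_pow_mul_mem hi hgi hgP hreg, ?_⟩
  rw [IsScalarTower.algebraMap_eq S (AdjoinRoot P) A, ← Ideal.comap_comap,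
    comap_map_algebraMap_eq_of_pow_mul_mem hi hgi hgP, AdjoinRoot.algebraMap_eq, hcomap]

end FibreOfAdjoin

section Dimension

universe u v w

theorem ringKrullDim_eq_of_isIntegral {R S : Type*} [CommRing R] [CommRing S] [Algebra R S]
    [Algebra.IsIntegral R S] [FaithfulSMul R S] : ringKrullDim S = ringKrullDim R := by
  refine le_antisymm ?_ (iSup_le fun l => ?_)
  · exact Order.krullDim_le_of_strictMono (PrimeSpectrum.comap (algebraMap R S)) fun I J hIJ =>
      Ideal.IsIntegral.comap_lt_comap (R := R) (I := I.asIdeal) (J := J.asIdeal) hIJ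
  · obtain ⟨Q, -, hQ, hQl⟩ := Ideal.exists_ideal_over_prime_of_isIntegral l.head.asIdeal
      (⊥ : Ideal S)
      (by rw [Ideal.comap_bot_of_injective _ (FaithfulSMul.algebraMap_injective R S)]; exact bot_le)
    have : Q.LiesOver l.head.asIdeal := ⟨hQl.symm⟩
    obtain ⟨L, hL, -, -⟩ := Ideal.exists_ltSeries_of_hasGoingUp l Q
    rw [← hL]
    exact Order.LTSeries.length_le_krullDim L

theorem lift_trdeg_eq_of_isAlgebraic (R : Type u) (S : Type v) (A : Type w) [CommRing R]
    [Nontrivial R] [CommRing S] [CommRing A] [NoZeroDivisors A] [Algebra R S] [Algebra S A]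
    [Algebra R A] [IsScalarTower R S A] [FaithfulSMul R S] [FaithfulSMul S A]
    [Algebra.IsAlgebraic S A] :
    Cardinal.lift.{v} (Algebra.trdeg R A) = Cardinal.lift.{w} (Algebra.trdeg R S) := by
  rw [← lift_trdeg_add_eq R S A, trdeg_eq_zero (R := S), Cardinal.lift_zero, add_zero]

variable (K : Type*) {C : Type*} [Field K] [CommRing C] [IsDomain C] [Algebra K C]
  [Algebra.FiniteType K C]

theorem exists_ringKrullDim_eq_and_trdeg_eq : ∃ n : ℕ,
    ringKrullDim C = (n : WithBot ℕ∞) ∧ Algebra.trdeg K C = (n : Cardinal) := by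
  obtain ⟨n, φ, hφ, hφint⟩ := exists_integral_inj_algHom_of_fg K C
  algebraize [φ.toRingHom]
  have : IsScalarTower K (MvPolynomial (Fin n) K) C := .of_algHom φ
  have : FaithfulSMul (MvPolynomial (Fin n) K) C := (faithfulSMul_iff_algebraMap_injective _ _).2 hφ
  refine ⟨n, ?_, ?_⟩
  · rw [ringKrullDim_eq_of_isIntegral (R := MvPolynomial (Fin n) K),
      MvPolynomial.ringKrullDim_of_isNoetherianRing, ringKrullDim_eq_zero_of_field, zero_add,
      Nat.card_fin]
  · simpa [MvPolynomial.trdeg_of_isDomain] using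
      lift_trdeg_eq_of_isAlgebraic K (MvPolynomial (Fin n) K) C

theorem ringKrullDim_eq_natCast_iff_trdeg_eq (n : ℕ) :
    ringKrullDim C = (n : WithBot ℕ∞) ↔ Algebra.trdeg K C = (n : Cardinal) := by
  obtain ⟨m, hdim, htrdeg⟩ := exists_ringKrullDim_eq_and_trdeg_eq K (C := C)
  rw [hdim, htrdeg]
  norm_cast

end Dimension

section PrimitiveElement

theorem exists_forall_pow_smul_mem {S A : Type*} [CommRing S] [CommRing A] [Algebra S A]
    [Algebra.FiniteType S A] {M : Submonoid S} (U : Subalgebra S A)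
    (hU : ∀ a : A, ∃ s ∈ M, s • a ∈ U) : ∃ g ∈ M, ∀ a : A, ∃ N : ℕ, g ^ N • a ∈ U := by
  classical
  obtain ⟨t, ht⟩ := Algebra.FiniteType.out (R := S) (A := A)
  choose r hrM hrU using hU
  refine ⟨∏ a ∈ t, r a, prod_mem fun a _ => hrM a, fun a => ?_⟩
  induction (ht ▸ Algebra.mem_top : a ∈ Algebra.adjoin S (t : Set A)) using
    Algebra.adjoin_induction with
  | mem a ha =>
    refine ⟨1, ?_⟩
    rw [pow_one, ← Finset.prod_erase_mul t r ha, mul_smul]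
    exact U.smul_mem (hrU a) _
  | algebraMap s => exact ⟨0, U.smul_mem (U.algebraMap_mem s) _⟩
  | add a b _ _ iha ihb =>
    obtain ⟨M, hM⟩ := iha
    obtain ⟨N, hN⟩ := ihb
    refine ⟨M + N, ?_⟩
    rw [smul_add, pow_add]
    nth_rw 1 [mul_comm]
    rw [mul_smul, mul_smul]
    exact add_mem (U.smul_mem hM _) (U.smul_mem hN _)
  | mul a b _ _ iha ihb =>
    obtain ⟨M, hM⟩ := iha
    obtain ⟨N, hN⟩ := ihb
    refine ⟨M + N, ?_⟩
    rw [pow_add, ← smul_mul_smul_comm]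
    exact mul_mem hM hN

variable (S A : Type*) [CommRing S] [IsDomain S] [CommRing A] [IsDomain A]
  [Algebra S A] [FaithfulSMul S A] [Algebra.FiniteType S A] [Algebra.IsAlgebraic S A]

attribute [local instance] FractionRing.liftAlgebra

theorem finiteDimensional_fractionRing :
    FiniteDimensional (FractionRing S) (FractionRing A) := by
  have : Algebra.EssFiniteType A (FractionRing A) := .of_isLocalization _ A⁰
  have := Algebra.EssFiniteType.comp S A (FractionRing A)
  have : Algebra.EssFiniteType (FractionRing S) (FractionRing A) := .of_comp S _ _
  exact Algebra.finite_of_essFiniteType_of_isAlgebraic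

theorem exists_isIntegral_adjoin_fractionRing_eq_top [CharZero S] :
    ∃ θ : A, IsIntegral S θ ∧
      Algebra.adjoin (FractionRing S) {algebraMap A (FractionRing A) θ} = ⊤ := by
  have := finiteDimensional_fractionRing S A
  obtain ⟨θ₀, hθ₀⟩ := Field.exists_primitive_element (FractionRing S) (FractionRing A)
  obtain ⟨⟨a, _, s, hs, rfl⟩, ha⟩ := IsLocalization.surj (Algebra.algebraMapSubmonoid A S⁰) θ₀
  obtain ⟨y, hy0, hy⟩ := (Algebra.IsAlgebraic.isAlgebraic (R := S) a).exists_integral_multiple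
  refine ⟨y • a, hy, Algebra.adjoin_eq_top_of_primitive_element
    (Algebra.IsAlgebraic.isAlgebraic _) ?_⟩
  have hc : algebraMap S (FractionRing S) (y * s) ≠ 0 :=
    (map_ne_zero_iff _ (IsFractionRing.injective S _)).2
      (mul_ne_zero hy0 (nonZeroDivisors.ne_zero hs))
  have hθ : algebraMap A (FractionRing A) (y • a) =
      algebraMap (FractionRing S) (FractionRing A)
        (algebraMap S (FractionRing S) (y * s)) * θ₀ := by
    rw [Algebra.smul_def, map_mul, ← ha, map_mul, map_mul]
    simp only [← IsScalarTower.algebraMap_apply]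
    ring
  rw [eq_top_iff, ← hθ₀, IntermediateField.adjoin_simple_le_iff,
    eq_div_of_mul_eq ((map_ne_zero _).2 hc) ((mul_comm _ _).trans hθ.symm)]
  exact div_mem (IntermediateField.mem_adjoin_simple_self _ _)
    (IntermediateField.algebraMap_mem _ _)

theorem exists_isIntegral_forall_pow_smul_mem_adjoin [CharZero S] :
    ∃ θ : A, IsIntegral S θ ∧
      ∃ g : S, g ≠ 0 ∧ ∀ a : A, ∃ N : ℕ, g ^ N • a ∈ Algebra.adjoin S {θ} := by
  obtain ⟨θ, hθ, htop⟩ := exists_isIntegral_adjoin_fractionRing_eq_top S A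
  suffices ∃ g ∈ S⁰, ∀ a : A, ∃ N : ℕ, g ^ N • a ∈ Algebra.adjoin S {θ} from
    ⟨θ, hθ, this.imp fun g => And.imp_left nonZeroDivisors.ne_zero⟩
  refine exists_forall_pow_smul_mem _ fun a => ?_
  obtain ⟨⟨s, hs⟩, hsa⟩ := multiple_mem_adjoin_of_mem_localization_adjoin S⁰ (FractionRing S)
    {algebraMap A (FractionRing A) θ} (algebraMap A (FractionRing A) a) (htop ▸ Algebra.mem_top)
  let i := IsScalarTower.toAlgHom S A (FractionRing A)
  rw [← Set.image_singleton, ← IsScalarTower.coe_toAlgHom' S, ← AlgHom.map_adjoin] at hsa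
  obtain ⟨u, hu, hua⟩ := hsa
  refine ⟨s, hs, ?_⟩
  rwa [← IsFractionRing.injective A (FractionRing A) (hua.trans (map_smul i s a).symm)]

end PrimitiveElement

section HilbertSubset

theorem finSuccEquiv_map {R R' : Type*} [CommRing R] [CommRing R'] (f : R →+* R') (n : ℕ)
    (q : MvPolynomial (Fin (n + 1)) R) :
    finSuccEquiv R' n (map f q) = (finSuccEquiv R n q).map (map f) := by
  ext i m
  rw [finSuccEquiv_coeff_coeff, coeff_map, Polynomial.coeff_map, coeff_map,
    finSuccEquiv_coeff_coeff]

attribute [local instance] algebraMvPolynomial in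
theorem irreducible_map_fractionRing_of_monic {R σ : Type*} [CommRing R] [IsDomain R]
    [IsIntegrallyClosed (MvPolynomial σ R)] {P : Polynomial (MvPolynomial σ R)} (hP : P.Monic)
    (hirr : Irreducible P) : Irreducible (P.map (map (algebraMap R (FractionRing R)))) := by
  have hunit (c : R⁰.map (C : R →+* MvPolynomial σ R)) :
      IsUnit (algebraMap _ (FractionRing (MvPolynomial σ R)) c.1) := by
    obtain ⟨_, c, hc, rfl⟩ := c
    refine IsUnit.mk0 _ ?_
    simpa using nonZeroDivisors.ne_zero hc
  refine (hP.map _).irreducible_of_irreducible_map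
    (IsLocalization.lift (S := MvPolynomial σ (FractionRing R)) hunit) _ ?_
  rw [Polynomial.map_map, ← algebraMap_def, IsLocalization.lift_comp]
  exact hP.irreducible_iff_irreducible_map_fraction_map.1 hirr

variable {K ι : Type} [Field K]

theorem polySpecializesTo_map_algebraMap_iff {t : ι → K} {n : ℕ}
    {p : MvPolynomial (Fin n) (MvPolynomial ι K)} {q : MvPolynomial (Fin n) K} :
    PolySpecializesTo K t (map (algebraMap _ (RatFuncField K ι)) p) q ↔ q = map (eval t) p := by
  refine ⟨fun h => MvPolynomial.ext _ _ fun m => ?_, ?_⟩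
  · obtain ⟨a, b, hb, hba, hbq⟩ := h m
    rw [coeff_map, ← map_mul] at hba
    rw [← IsFractionRing.injective (MvPolynomial ι K) (RatFuncField K ι) hba, map_mul] at hbq
    rw [coeff_map, mul_left_cancel₀ hb hbq]
  · rintro rfl m
    exact ⟨p.coeff m, 1, by simp, by simp [coeff_map], by simp [coeff_map]⟩

theorem isHilbertSubset_setOf_eval_ne_zero_and_irreducible [Infinite K] {F : MvPolynomial ι K}
    (hF : F ≠ 0) {n : ℕ} {p : MvPolynomial (Fin n) (MvPolynomial ι K)}
    (hp : Irreducible (map (algebraMap _ (RatFuncField K ι)) p)) :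
    IsHilbertSubset K ι {t | eval t F ≠ 0 ∧ Irreducible (map (eval t) p)} := by
  refine ⟨n, 1, 1, fun _ => map (algebraMap _ (RatFuncField K ι)) p, fun _ => F,
    fun _ => hp, ?_, ?_⟩
  · by_contra! h
    exact hF (MvPolynomial.funext fun t => by rw [h t 0, map_zero])
  · ext t
    simp only [polySpecializesTo_map_algebraMap_iff, exists_const, forall_const, exists_eq_left,
      Set.mem_ofPred_eq]

theorem isHilbertSubset_setOf_eval_ne_zero_and_prime [Infinite K] {F : MvPolynomial ι K}
    (hF : F ≠ 0) {e : ℕ} {P : Polynomial (MvPolynomial (Fin e) (MvPolynomial ι K))}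
    (hP : P.Monic) (hirr : Irreducible P) :
    IsHilbertSubset K ι {t | eval t F ≠ 0 ∧ Prime (P.map (map (eval t)))} := by
  obtain ⟨p, rfl⟩ := (finSuccEquiv (MvPolynomial ι K) e).surjective P
  simp only [← finSuccEquiv_map, ← irreducible_iff_prime,
    MulEquiv.irreducible_iff]
  refine isHilbertSubset_setOf_eval_ne_zero_and_irreducible hF ?_
  rw [← MulEquiv.irreducible_iff (finSuccEquiv (RatFuncField K ι) e), finSuccEquiv_map]
  exact irreducible_map_fractionRing_of_monic hP hirr

end HilbertSubset

section SpecialFibre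

universe u

theorem isUnit_mk_ker_iff {R S : Type*} [CommRing R] [CommRing S] {φ : R →+* S}
    (hφ : Function.Surjective φ) {a : R} :
    IsUnit (Ideal.Quotient.mk (RingHom.ker φ) a) ↔ IsUnit (φ a) :=
  (MulEquiv.isUnit_map (RingHom.quotientKerEquivOfSurjective hφ)).symm

theorem isAlgebraic_quotient_of_isIntegral_pow_smul {S A : Type*} [CommRing S] [CommRing A]
    [Algebra S A] {g : S} (hg : ∀ a : A, ∃ N : ℕ, IsIntegral S (g ^ N • a)) (𝔭 : Ideal S)
    (𝔓 : Ideal A) [𝔭.IsPrime] [𝔓.LiesOver 𝔭] (hg𝔭 : g ∉ 𝔭) :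
    Algebra.IsAlgebraic (S ⧸ 𝔭) (A ⧸ 𝔓) := by
  refine ⟨fun x => ?_⟩
  obtain ⟨a, rfl⟩ := Ideal.Quotient.mk_surjective x
  obtain ⟨N, hN⟩ := hg a
  refine IsAlgebraic.iff_exists_smul_integral.2 ⟨Ideal.Quotient.mk 𝔭 (g ^ N), ?_, ?_⟩
  · rw [map_pow]
    exact pow_ne_zero N (mt Ideal.Quotient.eq_zero_iff_mem.1 hg𝔭)
  · exact (hN.map (IsScalarTower.toAlgHom S A (A ⧸ 𝔓))).tower_top

theorem trdeg_quotient_eq_of_liesOver_ker {K : Type*} {S S' A : Type u} [Field K] [CommRing S]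
    [CommRing S'] [Nontrivial S'] [CommRing A] [Algebra K S] [Algebra K S'] [Algebra S A]
    [Algebra K A] [IsScalarTower K S A] {φ : S →ₐ[K] S'} (hφ : Function.Surjective φ)
    (𝔓 : Ideal A) [𝔓.IsPrime] [𝔓.LiesOver (RingHom.ker φ)]
    [Algebra.IsAlgebraic (S ⧸ RingHom.ker φ) (A ⧸ 𝔓)] :
    Algebra.trdeg K (A ⧸ 𝔓) = Algebra.trdeg K S' := by
  have : Nontrivial (S ⧸ RingHom.ker φ) := Ideal.Quotient.nontrivial_iff.2 (RingHom.ker_ne_top φ)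
  rw [← (Ideal.quotientKerAlgEquivOfSurjective hφ).trdeg_eq]
  simpa using lift_trdeg_eq_of_isAlgebraic K (S ⧸ RingHom.ker φ) (A ⧸ 𝔓)

section

variable {K ι A : Type} [Field K] [CharZero K] [Finite ι] [CommRing A] [IsDomain A] [Algebra K A]
  [Algebra (MvPolynomial ι K) A] [IsScalarTower K (MvPolynomial ι K) A]
  [Algebra.FiniteType (MvPolynomial ι K) A]

theorem exists_isHilbertSubset_isPrime_map_ker_eval_of_isAlgebraic (e : ℕ)
    [Algebra (MvPolynomial (Fin e) (MvPolynomial ι K)) A]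
    [IsScalarTower (MvPolynomial ι K) (MvPolynomial (Fin e) (MvPolynomial ι K)) A]
    [FaithfulSMul (MvPolynomial (Fin e) (MvPolynomial ι K)) A]
    [Algebra.IsAlgebraic (MvPolynomial (Fin e) (MvPolynomial ι K)) A] :
    ∃ H : Set (ι → K), IsHilbertSubset K ι H ∧ ∀ t ∈ H,
      ((RingHom.ker (eval t)).map (algebraMap (MvPolynomial ι K) A)).IsPrime ∧
      Algebra.trdeg K (A ⧸ (RingHom.ker (eval t)).map (algebraMap (MvPolynomial ι K) A)) = e := by
  let S := MvPolynomial (Fin e) (MvPolynomial ι K)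
  have : Algebra.FiniteType S A := .of_restrictScalars_finiteType (MvPolynomial ι K) S A
  have : IsScalarTower K S A := .to₁₃₄ K (MvPolynomial ι K) S A
  obtain ⟨θ, hθ, g, hg0, hg⟩ := exists_isIntegral_forall_pow_smul_mem_adjoin S A
  obtain ⟨f, hf0, hf⟩ := exists_ne_zero_forall_mem_map_of_mul_mem_map (MvPolynomial ι K)
    ((FaithfulSMul.algebraMap_eq_zero_iff S A).not.2 hg0)
  obtain ⟨m, hm⟩ := ne_zero_iff.1 hg0
  refine ⟨_, isHilbertSubset_setOf_eval_ne_zero_and_prime (mul_ne_zero hf0 hm) (minpoly.monic hθ)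
    (minpoly.irreducible hθ), fun t ⟨hfm, hprime⟩ => ?_⟩
  rw [map_mul, mul_ne_zero_iff] at hfm
  let φ : S →ₐ[K] MvPolynomial (Fin e) K := mapAlgHom (aeval t)
  have hevalt : Function.Surjective (eval t) := fun c => ⟨C c, eval_C c⟩
  have hφ : Function.Surjective φ := map_surjective _ hevalt
  have hφg : φ g ≠ 0 := fun h => hfm.2 (by
    rw [← coeff_map, show map (eval t) g = 0 from h, coeff_zero])
  have hker : (RingHom.ker (eval t)).map (algebraMap (MvPolynomial ι K) A) =
      (RingHom.ker φ).map (algebraMap S A) := by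
    rw [IsScalarTower.algebraMap_eq (MvPolynomial ι K) S A, ← Ideal.map_map]
    exact congrArg _ (ker_map (eval t)).symm
  have hreg := hf _ ((isUnit_mk_ker_iff hevalt).2 (isUnit_iff_ne_zero.2 hfm.1))
  rw [hker] at hreg ⊢
  obtain ⟨hmapprime, hcomap⟩ :=
    isPrime_and_comap_eq_of_prime_map_minpoly (φ := φ.toRingHom) hθ hg hφ hprime hφg hreg
  have : (RingHom.ker φ).IsPrime := RingHom.ker_isPrime φ.toRingHom
  have : ((RingHom.ker φ).map (algebraMap S A)).IsPrime := hmapprime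
  have : ((RingHom.ker φ).map (algebraMap S A)).LiesOver (RingHom.ker φ) := ⟨hcomap.symm⟩
  have := isAlgebraic_quotient_of_isIntegral_pow_smul (fun a => (hg a).imp fun N h =>
    IsIntegral.of_mem_of_fg _ hθ.fg_adjoin_singleton _ h) (RingHom.ker φ)
    ((RingHom.ker φ).map (algebraMap S A)) hφg
  refine ⟨hmapprime, ?_⟩
  rw [trdeg_quotient_eq_of_liesOver_ker hφ, trdeg_of_isDomain, Cardinal.mk_fin,
    Cardinal.lift_natCast]

theorem exists_isHilbertSubset_isPrime_map_ker_eval [FaithfulSMul (MvPolynomial ι K) A] {e : ℕ}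
    (htr : Algebra.trdeg (MvPolynomial ι K) A = e) :
    ∃ H : Set (ι → K), IsHilbertSubset K ι H ∧ ∀ t ∈ H,
      ((RingHom.ker (eval t)).map (algebraMap (MvPolynomial ι K) A)).IsPrime ∧
      Algebra.trdeg K (A ⧸ (RingHom.ker (eval t)).map (algebraMap (MvPolynomial ι K) A)) = e := by
  obtain ⟨κ, x, hx⟩ := exists_isTranscendenceBasis' (MvPolynomial ι K) A
  obtain ⟨σ⟩ := Cardinal.eq.1
    ((Cardinal.mk_fin e).trans (htr.symm.trans hx.cardinalMk_eq_trdeg.symm))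
  let z : MvPolynomial (Fin e) (MvPolynomial ι K) →ₐ[MvPolynomial ι K] A := aeval (x ∘ σ)
  algebraize [z.toRingHom]
  have : IsScalarTower (MvPolynomial ι K) (MvPolynomial (Fin e) (MvPolynomial ι K)) A :=
    .of_algHom z
  have : FaithfulSMul (MvPolynomial (Fin e) (MvPolynomial ι K)) A :=
    (faithfulSMul_iff_algebraMap_injective _ _).2 (hx.1.comp σ σ.injective)
  have : Algebra.IsAlgebraic (MvPolynomial (Fin e) (MvPolynomial ι K)) A := by
    rw [← trdeg_eq_zero_iff]
    have hadd := trdeg_add_eq (MvPolynomial ι K) (MvPolynomial (Fin e) (MvPolynomial ι K)) (A := A)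
    rw [trdeg_of_isDomain, htr, Cardinal.mk_fin, Cardinal.lift_natCast] at hadd
    exact Cardinal.eq_of_add_eq_add_left (hadd.trans (add_zero _).symm) (Cardinal.natCast_lt_aleph0)
  exact exists_isHilbertSubset_isPrime_map_ker_eval_of_isAlgebraic e

end

end SpecialFibre

section GenericAlgebraicIndependence

variable {K B R Λ σ : Type*}

theorem eval₂Hom_X_injective [CommRing B] [CommRing R] {φ : R →+* MvPolynomial Λ B}
    (hφ : Function.Injective (constantCoeff.comp φ)) : Function.Injective (eval₂Hom φ X) := by
  refine (injective_iff_map_eq_zero _).2 fun F hF => ?_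
  by_contra hF0
  -- At a minimal monomial `m`, only the term of `F` at `m` contributes to the image.
  obtain ⟨m, hm, hmin⟩ := F.support.exists_minimal (support_nonempty.2 hF0)
  have hterm (n : Λ →₀ ℕ) : ∏ l ∈ n.support, (X l : MvPolynomial Λ B) ^ n l = monomial n 1 := by
    rw [monomial_eq, C_1, one_mul, Finsupp.prod]
  have hcoeff : coeff m (eval₂Hom φ X F) = constantCoeff (φ (coeff m F)) := by
    classical
    simp only [coe_eval₂Hom, eval₂_eq, hterm, coeff_sum, coeff_mul_monomial', mul_one]
    rw [Finset.sum_eq_single_of_mem m hm fun n hn hne =>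
      if_neg fun hle => hne (le_antisymm hle (hmin hn hle)), if_pos le_rfl, tsub_self,
      constantCoeff_eq]
  refine mem_support_iff.1 hm (hφ ?_)
  rw [RingHom.comp_apply, ← hcoeff, hF, coeff_zero, map_zero]

theorem aeval_X_add_C_injective [CommRing B] (δ : Λ → B) :
    Function.Injective
      (aeval fun l => X l + C (δ l) : MvPolynomial Λ B →ₐ[B] MvPolynomial Λ B) := by
  let τ : MvPolynomial Λ B →ₐ[B] MvPolynomial Λ B := aeval fun l => X l + C (δ l)
  let τinv : MvPolynomial Λ B →ₐ[B] MvPolynomial Λ B := aeval fun l => X l - C (δ l)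
  have hinv : τinv.comp τ = AlgHom.id B _ := by
    ext1 l
    simp [τ, τinv, algebraMap_eq]
  exact Function.LeftInverse.injective (g := τinv) fun q => DFunLike.congr_fun hinv q

theorem constantCoeff_aeval_X_add_C [CommRing B] (δ : Λ → B) (q : MvPolynomial Λ B) :
    constantCoeff (aeval (fun l => X l + C (δ l)) q : MvPolynomial Λ B) = eval δ q := by
  induction q using MvPolynomial.induction_on with
  | C b => simp [algebraMap_eq]
  | add q₁ q₂ h₁ h₂ => simp only [map_add, h₁, h₂]
  | mul_X q l h => simp only [map_mul, map_add, aeval_X, h, constantCoeff_X, constantCoeff_C,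
      zero_add, eval_X]

variable [CommRing K] [CommRing B] [Algebra K B]

theorem aevalTower_X_injective [CommRing R] [Algebra K R] {φ : R →ₐ[K] MvPolynomial Λ B} (δ : Λ → K)
    (hφ : Function.Injective fun c => eval (algebraMap K B ∘ δ) (φ c)) :
    Function.Injective (aevalTower φ X) := by
  let τ : MvPolynomial Λ B →ₐ[B] MvPolynomial Λ B := aeval fun l => X l + C (algebraMap K B (δ l))
  let τ' : MvPolynomial Λ R →ₐ[R] MvPolynomial Λ R := aeval fun l => X l + C (algebraMap K R (δ l))
  let ψ : R →+* MvPolynomial Λ B := (τ : MvPolynomial Λ B →+* MvPolynomial Λ B).comp φ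
  have hψ : Function.Injective (constantCoeff.comp ψ) := by
    convert hφ
    exact constantCoeff_aeval_X_add_C _ (φ _)
  have hcomm : (τ : MvPolynomial Λ B →+* _).comp (aevalTower φ X : MvPolynomial Λ R →+* _) =
      (eval₂Hom ψ X).comp (τ' : MvPolynomial Λ R →+* _) := by
    refine ringHom_ext (fun c => ?_) fun l => ?_
    · simp [ψ, τ', algebraMap_eq]
    · have : τ (φ (algebraMap K R (δ l))) = C (algebraMap K B (δ l)) := by
        rw [φ.commutes, IsScalarTower.algebraMap_apply K B (MvPolynomial Λ B), τ.commutes,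
          algebraMap_eq]
      simp only [RingHom.comp_apply, RingHom.coe_coe, aevalTower_X, τ', aeval_X, map_add,
        coe_eval₂Hom, eval₂_X, eval₂_C, ψ, this]
      exact aeval_X _ _
  refine Function.Injective.of_comp (f := τ) ?_
  have := (eval₂Hom_X_injective hψ).comp (aeval_X_add_C_injective fun l => algebraMap K R (δ l))
  convert this
  exact congrArg DFunLike.coe hcomm

theorem algebraicIndependent_sumElim_X (δ : Λ → K) {w : σ → MvPolynomial Λ B}
    (hw : AlgebraicIndependent K fun i => eval (algebraMap K B ∘ δ) (w i)) :
    AlgebraicIndependent K (Sum.elim X w) := by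
  have hspec : Function.Injective fun c => eval (algebraMap K B ∘ δ) (aeval (R := K) w c) := by
    have h : ((aeval (algebraMap K B ∘ δ) : MvPolynomial Λ B →ₐ[B] B).restrictScalars K).comp
        (aeval w) = aeval fun i => eval (algebraMap K B ∘ δ) (w i) := by
      ext1 i
      simp [aeval_eq_eval]
    rw [AlgebraicIndependent, ← h] at hw
    exact hw
  have hfactor : aeval (R := K) (Sum.elim X w) =
      (aevalTower (aeval w) X).comp (sumAlgEquiv K Λ σ).toAlgHom := by
    ext1 x
    rcases x with l | i <;> simp
  rw [AlgebraicIndependent, hfactor]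
  exact (aevalTower_X_injective δ hspec).comp (sumAlgEquiv K Λ σ).injective

end GenericAlgebraicIndependence

section GenericSections

theorem ker_eval_eq_span {Λ R : Type*} [CommRing R] (b : Λ → R) :
    RingHom.ker (eval b) = Ideal.span (Set.range fun l => C (b l) - X l) := by
  refine le_antisymm (fun q hq => ?_) (Ideal.span_le.2 ?_)
  · set I := Ideal.span (Set.range fun l => C (b l) - X l)
    have hmk : Ideal.Quotient.mk I = ((Ideal.Quotient.mk I).comp C).comp (eval b) := by
      refine ringHom_ext (fun r => ?_) fun l => ?_
      · simp
      · rw [RingHom.comp_apply, eval_X, RingHom.comp_apply, eq_comm, Ideal.Quotient.eq]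
        exact Ideal.subset_span ⟨l, rfl⟩
    rw [← Ideal.Quotient.eq_zero_iff_mem, hmk, RingHom.comp_apply, (RingHom.mem_ker).1 hq, map_zero]
  · rintro _ ⟨l, rfl⟩
    simp [RingHom.mem_ker]

/-- The isomorphism `A ⧸ I ≃ B ⧸ f(I)` for a surjective `f : A → B` with `ker f ⊆ I`. -/
def quotientMapAlgEquivOfSurjective {K A B : Type*} [CommRing K] [CommRing A] [CommRing B]
    [Algebra K A] [Algebra K B] {f : A →ₐ[K] B} (hf : Function.Surjective f) {I : Ideal A}
    (hI : RingHom.ker f ≤ I) : (A ⧸ I) ≃ₐ[K] B ⧸ I.map f :=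
  (Ideal.quotientEquivAlgOfEq K (by
    ext x
    rw [RingHom.mem_ker, AlgHom.comp_apply, Ideal.Quotient.mkₐ_eq_mk,
      Ideal.Quotient.eq_zero_iff_mem, ← Ideal.mem_comap, Ideal.comap_map_of_surjective' f hf,
      sup_eq_left.2 hI])).trans
    (Ideal.quotientKerAlgEquivOfSurjective (f := (Ideal.Quotient.mkₐ K (I.map f)).comp f)
      ((Ideal.Quotient.mkₐ_surjective K _).comp hf))

section

variable {K B Λ σ ι : Type*} [CommRing K] [CommRing B] [Algebra K B]

theorem ker_eval_le_map_aeval_ker_eval (e : Λ ⊕ σ ≃ ι) (w : σ → MvPolynomial Λ B) (t : ι → K) :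
    RingHom.ker (eval fun l => algebraMap K B (t (e (.inl l)))) ≤
      (RingHom.ker (eval t)).map (aeval (R := K) (Sum.elim X w ∘ e.symm)) := by
  rw [ker_eval_eq_span, ker_eval_eq_span, Ideal.map_span, Ideal.span_le]
  rintro _ ⟨l, rfl⟩
  refine Ideal.subset_span ⟨_, ⟨e (.inl l), rfl⟩, ?_⟩
  simp [MvPolynomial.algebraMap_apply]

theorem map_eval_map_aeval_ker_eval (e : Λ ⊕ σ ≃ ι) (w : σ → MvPolynomial Λ B) (t : ι → K) :
    ((RingHom.ker (eval t)).map (aeval (R := K) (Sum.elim X w ∘ e.symm))).map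
        (eval fun l => algebraMap K B (t (e (.inl l)))) =
      Ideal.span (Set.range fun i =>
        algebraMap K B (t (e (.inr i))) -
          eval (fun l => algebraMap K B (t (e (.inl l)))) (w i)) := by
  rw [ker_eval_eq_span, Ideal.map_span, Ideal.map_span, ← Set.range_comp, ← Set.range_comp,
    ← e.surjective.range_comp]
  have himage : (eval (fun l => algebraMap K B (t (e (.inl l)))) ∘
      aeval (R := K) (Sum.elim X w ∘ e.symm) ∘ fun i => C (t i) - X i) ∘ e =
      Sum.elim (0 : Λ → B) fun i =>
        algebraMap K B (t (e (.inr i))) -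
          eval (fun l => algebraMap K B (t (e (.inl l)))) (w i) := by
    ext (l | i) <;> simp [MvPolynomial.algebraMap_apply]
  have hzero : Ideal.span (Set.range (0 : Λ → B)) = ⊥ := by simp
  rw [himage, Set.Sum.elim_range, Ideal.span_union, hzero, bot_sup_eq]

end

theorem trdeg_mvPolynomial_eq_of_card_add {K B Λ σ ι : Type} [Field K] [CommRing B] [IsDomain B]
    [Algebra K B] [Finite ι] (e : Λ ⊕ σ ≃ ι) [Algebra (MvPolynomial ι K) (MvPolynomial Λ B)]
    [IsScalarTower K (MvPolynomial ι K) (MvPolynomial Λ B)]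
    [FaithfulSMul (MvPolynomial ι K) (MvPolynomial Λ B)] {n : ℕ}
    (hn : Algebra.trdeg K B = (Nat.card σ + n : ℕ)) :
    Algebra.trdeg (MvPolynomial ι K) (MvPolynomial Λ B) = n := by
  have : Finite (Λ ⊕ σ) := .of_equiv ι e.symm
  have : Finite Λ := .of_injective _ (Sum.inl_injective (β := σ))
  have : Finite σ := .of_injective _ (Sum.inr_injective (α := Λ))
  have hbase := trdeg_add_eq K (MvPolynomial ι K) (A := MvPolynomial Λ B)
  have hcoeff := trdeg_add_eq K B (A := MvPolynomial Λ B)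
  rw [trdeg_of_isDomain, Cardinal.lift_id] at hbase hcoeff
  rw [← hcoeff, hn, ← Cardinal.mk_congr e, Cardinal.mk_sum, Cardinal.lift_id, Cardinal.lift_id,
    ← Nat.cast_card (α := σ), ← Nat.cast_card (α := Λ)] at hbase
  refine Cardinal.eq_of_add_eq_add_left (a := (Nat.card Λ + Nat.card σ : ℕ)) ?_
    Cardinal.natCast_lt_aleph0
  push_cast at hbase ⊢
  rw [hbase]
  ring

theorem exists_isHilbertSubset_isPrime_span {K B Λ σ ι : Type} [Field K] [CharZero K] [Finite ι]
    [CommRing B] [IsDomain B] [Algebra K B] [Algebra.FiniteType K B] (e : Λ ⊕ σ ≃ ι)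
    {w : σ → MvPolynomial Λ B} (hw : AlgebraicIndependent K (Sum.elim X w)) {n : ℕ}
    (hn : Algebra.trdeg K B = (Nat.card σ + n : ℕ)) :
    ∃ H : Set (ι → K), IsHilbertSubset K ι H ∧ ∀ t ∈ H,
      (Ideal.span (Set.range fun i => algebraMap K B (t (e (.inr i))) -
        eval (fun l => algebraMap K B (t (e (.inl l)))) (w i))).IsPrime ∧
      Algebra.trdeg K (B ⧸ Ideal.span (Set.range fun i => algebraMap K B (t (e (.inr i))) -
        eval (fun l => algebraMap K B (t (e (.inl l)))) (w i))) = n := by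
  let z : MvPolynomial ι K →ₐ[K] MvPolynomial Λ B := aeval (Sum.elim X w ∘ e.symm)
  algebraize [z.toRingHom]
  have : IsScalarTower K (MvPolynomial ι K) (MvPolynomial Λ B) := .of_algHom z
  have : FaithfulSMul (MvPolynomial ι K) (MvPolynomial Λ B) :=
    (faithfulSMul_iff_algebraMap_injective _ _).2 (hw.comp e.symm e.symm.injective)
  have : Finite Λ := .of_injective _ (e.injective.comp Sum.inl_injective)
  have : Algebra.FiniteType K (MvPolynomial Λ B) := .trans (S := B) inferInstance inferInstance
  have : Algebra.FiniteType (MvPolynomial ι K) (MvPolynomial Λ B) :=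
    .of_restrictScalars_finiteType K (MvPolynomial ι K) _
  obtain ⟨H, hH, hfibre⟩ := exists_isHilbertSubset_isPrime_map_ker_eval
    (trdeg_mvPolynomial_eq_of_card_add (ι := ι) e hn)
  refine ⟨H, hH, fun t ht => ?_⟩
  obtain ⟨hprime, htrdeg⟩ := hfibre t ht
  let ε : MvPolynomial Λ B →ₐ[K] B :=
    (aeval fun l => algebraMap K B (t (e (.inl l)))).restrictScalars K
  have hε : Function.Surjective ε := fun b => ⟨C b, by simp [ε]⟩
  have hker : RingHom.ker ε ≤
      (RingHom.ker (eval t)).map (algebraMap (MvPolynomial ι K) (MvPolynomial Λ B)) :=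
    ker_eval_le_map_aeval_ker_eval e w t
  have hspan : _ = ((RingHom.ker (eval t)).map
      (algebraMap (MvPolynomial ι K) (MvPolynomial Λ B))).map ε :=
    (map_eval_map_aeval_ker_eval e w t).symm
  rw [hspan]
  exact ⟨Ideal.map_isPrime_of_surjective hε hker,
    (quotientMapAlgEquivOfSurjective hε hker).trdeg_eq.symm.trans htrdeg⟩

theorem sumElim_val_sigmaMk_bijective {σ : Type*} {M : σ → Type*} (c : ∀ i, M i) :
    Function.Bijective (Sum.elim Subtype.val fun i => ⟨i, c i⟩ :
      {x : Σ i, M i // x.2 ≠ c x.1} ⊕ σ → Σ i, M i) := by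
  refine ⟨Subtype.val_injective.sumElim (fun _ _ h => congrArg Sigma.fst h) ?_, ?_⟩
  · rintro ⟨_, hx⟩ i rfl
    exact hx rfl
  · rintro ⟨i, m⟩
    by_cases h : m = c i
    · exact ⟨.inr i, by rw [h]; rfl⟩
    · exact ⟨.inl ⟨⟨i, m⟩, h⟩, rfl⟩

theorem exists_isHilbertSubset_isPrime_span_sum_smul {K B σ : Type} {M : σ → Type} [Field K]
    [CharZero K] [Finite σ] [∀ i, Fintype (M i)] [CommRing B] [IsDomain B] [Algebra K B]
    [Algebra.FiniteType K B] {b : ∀ i, M i → B} {c j : ∀ i, M i} (hc : ∀ i, b i (c i) = 1)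
    (hj : AlgebraicIndependent K fun i => b i (j i)) {n : ℕ}
    (hn : Algebra.trdeg K B = (Nat.card σ + n : ℕ)) :
    ∃ H : Set ((Σ i, M i) → K), IsHilbertSubset K (Σ i, M i) H ∧ ∀ t ∈ H,
      (Ideal.span (Set.range fun i => ∑ m, t ⟨i, m⟩ • b i m)).IsPrime ∧
      Algebra.trdeg K (B ⧸ Ideal.span (Set.range fun i => ∑ m, t ⟨i, m⟩ • b i m)) = n := by
  classical
  have hjc (i : σ) : j i ≠ c i := fun h =>
    hj.transcendental i (by simpa only [h, hc] using isAlgebraic_one)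
  let Λ := {x : Σ i, M i // x.2 ≠ c x.1}
  let e : Λ ⊕ σ ≃ Σ i, M i := .ofBijective _ (sumElim_val_sigmaMk_bijective c)
  let w (i : σ) : MvPolynomial Λ B :=
    -∑ m : {m // m ≠ c i}, C (b i m) * X ⟨⟨i, m⟩, m.2⟩
  let δ (x : Λ) : K := if x.1.2 = j x.1.1 then -1 else 0
  have hw : AlgebraicIndependent K fun i => eval (algebraMap K B ∘ δ) (w i) := by
    convert hj with i
    simp only [w, δ, map_neg, map_sum, map_mul, eval_C, eval_X, Function.comp_apply]
    rw [Fintype.sum_eq_single ⟨j i, hjc i⟩ fun m hm => by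
      simp [mt Subtype.ext hm]]
    simp
  obtain ⟨H, hH, hspan⟩ :=
    exists_isHilbertSubset_isPrime_span e (algebraicIndependent_sumElim_X δ hw) hn
  refine ⟨H, hH, fun t ht => ?_⟩
  have hsum (i : σ) : ∑ m, t ⟨i, m⟩ • b i m = algebraMap K B (t (e (.inr i))) -
      eval (fun l => algebraMap K B (t (e (.inl l)))) (w i) := by
    rw [Fintype.sum_eq_add_sum_subtype_ne _ (c i), hc]
    simp only [Algebra.smul_def, mul_one, w, map_neg, map_sum, map_mul, eval_C, eval_X,
      sub_neg_eq_add, mul_comm (b i _)]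
    rfl
  rw [funext hsum]
  exact hspan t ht

theorem exists_algebraicIndependent_comp_of_adjoin_range_eq_top {K A ι : Type*} [Field K]
    [CommRing A] [IsDomain A] [Algebra K A] {x : ι → A}
    (hx : Algebra.adjoin K (Set.range x) = ⊤) {ρ : ℕ} (hρ : ρ ≤ Algebra.trdeg K A) :
    ∃ j : Fin ρ → ι, AlgebraicIndependent K (x ∘ j) := by
  have : Algebra.IsAlgebraic (Algebra.adjoin K (Set.range x)) A :=
    ⟨fun a => isAlgebraic_algebraMap (⟨a, hx ▸ Algebra.mem_top⟩ : Algebra.adjoin K (Set.range x))⟩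
  obtain ⟨t, ht, hbasis⟩ := exists_isTranscendenceBasis_subset (R := K) (Set.range x)
  rw [← hbasis.cardinalMk_eq_trdeg, ← Cardinal.lift_mk_fin, ← Cardinal.lift_uzero (Cardinal.mk t),
    Cardinal.lift_mk_le'] at hρ
  obtain ⟨f⟩ := hρ
  choose j hj using fun i => ht (f i).2
  refine ⟨j, ?_⟩
  convert hbasis.1.comp f f.injective
  exact funext hj

end GenericSections

section GenericPolynomials

theorem adjoin_range_comp_X_eq_top {K A σ : Type*} [CommRing K] [CommRing A] [Algebra K A]
    {f : MvPolynomial σ K →ₐ[K] A} (hf : Function.Surjective f) :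
    Algebra.adjoin K (Set.range (f ∘ X)) = ⊤ := by
  rw [Set.range_comp, ← AlgHom.map_adjoin, adjoin_range_X, Algebra.map_top,
    (AlgHom.range_eq_top f).2 hf]

theorem map_span_range_genPolyAt {K A : Type} [Field K] [CommRing A] [Algebra K A] {s ρ : ℕ}
    {D : Fin ρ → ℕ} (f : MvPolynomial (Fin s) K →ₐ[K] A) (lam : LamIdx s ρ D → K) :
    (Ideal.span (Set.range fun i => genPolyAt K s (D i) fun m => lam ⟨i, m⟩)).map f =
      Ideal.span (Set.range fun i => ∑ m, lam ⟨i, m⟩ • f (monomial m.1 1)) := by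
  rw [Ideal.map_span, ← Set.range_comp]
  congr! with i
  simp only [Function.comp_apply, genPolyAt, map_sum, ← map_smul, smul_eq_mul,
    mul_one]

theorem isPrime_sup_and_ringKrullDim_eq_of_map_mkₐ {K T : Type*} [Field K] [CommRing T]
    [Algebra K T] [Algebra.FiniteType K T] {p I : Ideal T}
    (hprime : (I.map (Ideal.Quotient.mkₐ K p)).IsPrime) {n : ℕ}
    (htrdeg : Algebra.trdeg K ((T ⧸ p) ⧸ I.map (Ideal.Quotient.mkₐ K p)) = n) :
    (p ⊔ I).IsPrime ∧ ringKrullDim (T ⧸ p ⊔ I) = n := by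
  let f := DoubleQuot.quotQuotEquivQuotSupₐ K p I
  refine ⟨(Ideal.Quotient.isDomain_iff_prime _).1 (f.symm.toMulEquiv.isDomain _), ?_⟩
  rw [← ringKrullDim_eq_of_ringEquiv f.toRingEquiv]
  exact (ringKrullDim_eq_natCast_iff_trdeg_eq K n).2 htrdeg

end GenericPolynomials

/-- `K` of characteristic `0`, `p ⊆ K[Y]` prime with `dim K[Y]/p = d > 0`,
`0 < ρ ≤ d`, `D_i ≥ 1`.  There is a Hilbert subset `H` of `K^{N_{D_1}+…+N_{D_ρ}}` such
that for every `λ = (λ_1,…,λ_ρ) ∈ H` the ideal `⟨p, Q_{D_1}(λ_1,Y),…,Q_{D_ρ}(λ_ρ,Y)⟩` of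
`K[Y]` is prime, with quotient of Krull dimension `d − ρ`. -/
theorem stmt_9 (K : Type) [Field K] [CharZero K] (s : ℕ)
    (p : Ideal (MvPolynomial (Fin s) K)) (hp : p.IsPrime)
    (d : ℕ) (hd0 : 0 < d)
    (hd : ringKrullDim (MvPolynomial (Fin s) K ⧸ p) = (d : WithBot ℕ∞))
    (ρ : ℕ) (hρ0 : 0 < ρ) (hρd : ρ ≤ d) (D : Fin ρ → ℕ) (hD : ∀ i, 1 ≤ D i) :
    ∃ H : Set (LamIdx s ρ D → K), IsHilbertSubset K (LamIdx s ρ D) H ∧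
      ∀ lam ∈ H,
        (p ⊔ Ideal.span (Set.range fun i : Fin ρ =>
          genPolyAt K s (D i) (fun mo => lam ⟨i, mo⟩))).IsPrime ∧
        ringKrullDim (MvPolynomial (Fin s) K ⧸
          (p ⊔ Ideal.span (Set.range fun i : Fin ρ =>
            genPolyAt K s (D i) (fun mo => lam ⟨i, mo⟩)))) = ((d - ρ : ℕ) : WithBot ℕ∞) := by
  have := hp
  let mk := Ideal.Quotient.mkₐ K p
  have htrdeg : Algebra.trdeg K (MvPolynomial (Fin s) K ⧸ p) = d :=
    (ringKrullDim_eq_natCast_iff_trdeg_eq K d).1 hd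
  obtain ⟨j, hj⟩ := exists_algebraicIndependent_comp_of_adjoin_range_eq_top
    (adjoin_range_comp_X_eq_top (Ideal.Quotient.mkₐ_surjective K p)) (htrdeg ▸ Nat.cast_le.2 hρd)
  have hcard : d = Nat.card (Fin ρ) + (d - ρ) := by rw [Nat.card_fin]; omega
  obtain ⟨H, hH, hspan⟩ := exists_isHilbertSubset_isPrime_span_sum_smul
    (M := fun i => MonLE s (D i)) (b := fun _ m => mk (monomial m.1 1))
    (c := fun _ => ⟨0, by simp⟩) (j := fun i => ⟨Finsupp.single (j i) 1, by simpa using hD i⟩)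
    (fun _ => map_one mk) hj (htrdeg.trans (congrArg _ hcard))
  refine ⟨H, hH, fun lam hlam => ?_⟩
  obtain ⟨hprime, hdim⟩ := hspan lam hlam
  rw [← map_span_range_genPolyAt] at hprime hdim
  exact isPrime_sup_and_ringKrullDim_eq_of_map_mkₐ hprime hdim

end
end

section
/- Let K be a Hilbertian field of characteristic 0, l ≥ 1, and P_1(Y),…,P_l(Y) ∈ K[Y] polynomials such that p = ⟨P_1,…,P_l⟩ is a prime ideal of K[Y] with d := Krull dimension of K[Y]/p > 0. Fix an integer D ≥ 1 and let Q_D(Λ,Y) be the generic polynomial of degree D, with N_D parameter variables. Then the set of λ ∈ K^{N_D} such that the ideal ⟨P_1,…,P_l, Q_D(λ,Y)⟩ of K[Y] is prime and K[Y] modulo this ideal has Krull dimension d − 1 is Zariski-dense in K^{N_D}. -/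
open MvPolynomial

noncomputable section

/-
By Noether normalization `B = K[Y]/p` is a finite extension of a polynomial ring
`A = K[T_1, …, T_d]`. For generic `λ`, the class `θ` of `Q_λ` in `B` generates `Frac B` over
`Frac A` and is transcendental over `K`: this excludes finitely many proper subspaces of `λ`'s.
Let `m ∈ A[X]` be the minimal polynomial of `θ`. Since `m ∉ K[X]`, Hilbertianity of `K` provides
infinitely many `c ∈ K` with `m(c)` irreducible in `A`. For these, `θ - c` is prime in
`A[θ] ≅ A[X]/(m)`, with quotient `A/(m(c))` of dimension `d - 1`. Choose `h ≠ 0` in the conductor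
of `A[θ]` in `B`. Each associated prime of `B/(h)` contains at most one `θ - c`, so
`θ - c` is a non-zero-divisor on `B/(h)` for all but finitely many `c`, and then primality and
dimension carry over to `B`. Finally `θ - c` is the class of `Q_μ`, where `μ` is `λ` with its
constant coefficient decreased by `c`, so `μ` avoids a given hypersurface not containing `λ`
for all but finitely many `c`.
-/

section Quotient

lemma isPrime_map_quotientMk_iff {R : Type*} [CommRing R] {I J : Ideal R} :
    (J.map (Ideal.Quotient.mk I)).IsPrime ↔ (I ⊔ J).IsPrime := by
  rw [← Ideal.Quotient.isDomain_iff_prime, ← Ideal.Quotient.isDomain_iff_prime]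
  exact (DoubleQuot.quotQuotEquivQuotSup I J).toMulEquiv.isDomain_iff

lemma ringKrullDim_quotient_map_quotientMk {R : Type*} [CommRing R] (I J : Ideal R) :
    ringKrullDim ((R ⧸ I) ⧸ J.map (Ideal.Quotient.mk I)) = ringKrullDim (R ⧸ I ⊔ J) :=
  ringKrullDim_eq_of_ringEquiv (DoubleQuot.quotQuotEquivQuotSup I J)

end Quotient

section Dimension

lemma ringKrullDim_eq_of_isIntegral_of_injective {R S : Type*} [CommRing R] [CommRing S]
    [Algebra R S] [Algebra.IsIntegral R S] (hinj : Function.Injective (algebraMap R S)) :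
    ringKrullDim S = ringKrullDim R := by
  apply le_antisymm
  · refine Order.krullDim_le_of_strictMono (PrimeSpectrum.comap (algebraMap R S)) fun I J h => ?_
    exact Ideal.IsIntegral.comap_lt_comap (I := I.asIdeal) (J := J.asIdeal) h
  · refine iSup_le fun l => ?_
    obtain ⟨Q, -, hQ, hQl⟩ := Ideal.exists_ideal_over_prime_of_isIntegral (S := S) l.head.asIdeal ⊥
      (by rw [Ideal.comap_bot_of_injective _ hinj]; exact bot_le)
    have : Q.LiesOver l.head.asIdeal := ⟨hQl.symm⟩
    obtain ⟨L, hL, -⟩ := Ideal.exists_ltSeries_of_hasGoingUp l Q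
    exact hL ▸ Order.LTSeries.length_le_krullDim L

lemma ringKrullDim_quotient_of_liesOver {A B : Type*} [CommRing A] [CommRing B] [Algebra A B]
    [Algebra.IsIntegral A B] (P : Ideal B) (p : Ideal A) [P.LiesOver p] :
    ringKrullDim (B ⧸ P) = ringKrullDim (A ⧸ p) :=
  ringKrullDim_eq_of_isIntegral_of_injective (FaithfulSMul.algebraMap_injective _ _)

lemma height_eq_height_comap_C_add_one_of_isMaximal {R : Type*} [CommRing R]
    [IsNoetherianRing R] [IsJacobsonRing R] (M : Ideal (Polynomial R)) [M.IsMaximal] :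
    M.height = (M.comap Polynomial.C).height + 1 := by
  have := Polynomial.isMaximal_comap_C_of_isJacobsonRing M
  have : M.LiesOver (M.comap Polynomial.C) := ⟨rfl⟩
  exact Polynomial.height_eq_height_add_one (M.comap Polynomial.C) M

lemma height_eq_natCard_of_isMaximal {K σ : Type*} [Field K] [Finite σ]
    (M : Ideal (MvPolynomial σ K)) [M.IsMaximal] : M.height = Nat.card σ := by
  induction σ using Finite.induction_empty_option with
  | of_equiv e ih =>
    rw [← Nat.card_congr e, ← ih (M.comap (renameEquiv K e).toRingEquiv), RingEquiv.height_comap]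
  | h_empty =>
    let := (isEmptyRingEquiv K PEmpty).toMulEquiv.isField (Field.toIsField K) |>.toField
    have hM : M = ⊥ := Ideal.eq_bot_of_prime M
    simp [hM]
  | h_option ih =>
    have := Ideal.map_isMaximal_of_equiv (optionEquivLeft K _).toRingEquiv (p := M)
    have := Polynomial.isMaximal_comap_C_of_isJacobsonRing
      (M.map (optionEquivLeft K _).toRingEquiv)
    rw [← RingEquiv.height_map (optionEquivLeft K _).toRingEquiv M,
      height_eq_height_comap_C_add_one_of_isMaximal, ih, Finite.card_option, Nat.cast_add_one]

lemma ringKrullDim_quotient_span_singleton_add_one {K σ : Type*} [Field K] [Finite σ]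
    {p : MvPolynomial σ K} (hp0 : p ≠ 0) (hp : ¬ IsUnit p) :
    ringKrullDim (MvPolynomial σ K ⧸ Ideal.span {p}) + 1 = (Nat.card σ : WithBot ℕ∞) := by
  apply le_antisymm
  · have h := ringKrullDim_quotient_succ_le_of_nonZeroDivisor (mem_nonZeroDivisors_of_ne_zero hp0)
    rwa [MvPolynomial.ringKrullDim_of_isNoetherianRing, ringKrullDim_eq_zero_of_field,
      zero_add] at h
  · obtain ⟨M, hM, hpM⟩ := exists_max_ideal_of_mem_nonunits hp
    exact (congrArg _ (height_eq_natCard_of_isMaximal M)).ge.trans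
      (Ideal.height_le_ringKrullDim_quotient_add_one hpM)

lemma ringKrullDim_eq_of_finite_of_injective {K B σ : Type*} [Field K] [CommRing B] [Finite σ]
    [Algebra K B] {φ : MvPolynomial σ K →ₐ[K] B} (hinj : Function.Injective φ) (hfin : φ.Finite) :
    ringKrullDim B = (Nat.card σ : WithBot ℕ∞) := by
  algebraize [φ.toRingHom]
  have : Module.Finite (MvPolynomial σ K) B := hfin
  rw [ringKrullDim_eq_of_isIntegral_of_injective (R := MvPolynomial σ K) hinj,
    MvPolynomial.ringKrullDim_of_isNoetherianRing, ringKrullDim_eq_zero_of_field, zero_add]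

lemma exists_finite_injective_algHom_of_ringKrullDim_eq {K B : Type*} [Field K]
    [CommRing B] [Nontrivial B] [Algebra K B] [Algebra.FiniteType K B] {d : ℕ}
    (hd : ringKrullDim B = d) :
    ∃ φ : MvPolynomial (Fin d) K →ₐ[K] B, Function.Injective φ ∧ φ.Finite := by
  obtain ⟨r, φ, hinj, hfin⟩ := exists_finite_inj_algHom_of_fg K B
  obtain rfl : r = d := by
    simpa [hd, eq_comm] using ringKrullDim_eq_of_finite_of_injective hinj hfin
  exact ⟨φ, hinj, hfin⟩

end Dimension

section AdjoinRoot

variable {A B : Type*} [CommRing A] [CommRing B] [Algebra A B] {f : Polynomial A}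

lemma root_sub_algebraMap_dvd_map_iff (h : IsAdjoinRoot B f) (c : A) (g : Polynomial A) :
    h.root - algebraMap A B c ∣ h.map g ↔ f.eval c ∣ g.eval c := by
  have hroot : h.root - algebraMap A B c = h.map (Polynomial.X - Polynomial.C c) := by
    rw [map_sub, h.map_X, ← h.algebraMap_apply]
  constructor
  · rintro ⟨b, hb⟩
    obtain ⟨k, rfl⟩ := h.map_surjective b
    rw [hroot, ← map_mul, ← sub_eq_zero, ← map_sub, h.map_eq_zero_iff] at hb
    simpa using Polynomial.eval_dvd (x := c) hb
  · rintro ⟨a, ha⟩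
    obtain ⟨k, hk⟩ : Polynomial.X - Polynomial.C c ∣ g - Polynomial.C a * f := by
      simp [Polynomial.dvd_iff_isRoot, ha, mul_comm]
    have hf : h.map (Polynomial.C a * f) = 0 := h.map_eq_zero_iff.2 (dvd_mul_left f _)
    rw [hroot, ← sub_zero (h.map g), ← hf, ← map_sub, hk, map_mul]
    exact dvd_mul_right _ _

lemma isPrime_span_root_sub_algebraMap (h : IsAdjoinRoot B f) {c : A}
    (hc : (Ideal.span {f.eval c}).IsPrime) :
    (Ideal.span {h.root - algebraMap A B c}).IsPrime := by
  refine Ideal.isPrime_iff.2 ⟨?_, fun {u v} => ?_⟩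
  · rw [Ideal.ne_top_iff_one, Ideal.mem_span_singleton, ← map_one h.map,
      root_sub_algebraMap_dvd_map_iff, Polynomial.eval_one, ← Ideal.mem_span_singleton]
    exact hc.one_notMem
  · obtain ⟨g, rfl⟩ := h.map_surjective u
    obtain ⟨k, rfl⟩ := h.map_surjective v
    simp only [← map_mul, Ideal.mem_span_singleton, root_sub_algebraMap_dvd_map_iff,
      Polynomial.eval_mul]
    simpa only [Ideal.mem_span_singleton] using hc.mem_or_mem (x := g.eval c) (y := k.eval c)

end AdjoinRoot

section Conductor

lemma dvd_of_dvd_mul_of_isSMulRegular {B : Type*} [CommRing B] {h q : B}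
    (hh : IsSMulRegular B h)
    (hreg : IsSMulRegular (B ⧸ Ideal.span {h}) q) {x : B} (hx : q ∣ h * x) : q ∣ x := by
  obtain ⟨y, hy⟩ := hx
  have hqy : q • Ideal.Quotient.mk (Ideal.span {h}) y = 0 := by
    rw [Algebra.smul_def, Ideal.Quotient.algebraMap_eq, ← map_mul, ← hy,
      Ideal.Quotient.eq_zero_iff_mem, Ideal.mem_span_singleton]
    exact dvd_mul_right h x
  obtain ⟨z, rfl⟩ : h ∣ y := by
    rw [← Ideal.mem_span_singleton, ← Ideal.Quotient.eq_zero_iff_mem]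
    exact hreg.right_eq_zero_of_smul hqy
  exact ⟨z, hh (by simpa [mul_left_comm] using hy)⟩

variable {R B : Type*} [CommRing R] [CommRing B] [Algebra R B] {h q : R}

lemma algebraMap_dvd_algebraMap_iff_of_conductor [FaithfulSMul R B] [Algebra.IsIntegral R B]
    (hh : IsSMulRegular B (algebraMap R B h))
    (hcond : ∀ b, algebraMap R B h * b ∈ (algebraMap R B).range)
    (hreg : IsSMulRegular (B ⧸ Ideal.span {algebraMap R B h}) (algebraMap R B q))
    (hq : (Ideal.span {q}).IsPrime) {r : R} :
    algebraMap R B q ∣ algebraMap R B r ↔ q ∣ r := by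
  refine ⟨fun ⟨b, hb⟩ => ?_, map_dvd _⟩
  have hqh : ¬ q ∣ h := fun hqh => hq.ne_top <| Ideal.span_singleton_eq_top.2 <|
    isUnit_of_map_unit (algebraMap R B) q <| isUnit_of_dvd_one <|
      dvd_of_dvd_mul_of_isSMulRegular hh hreg <| by simpa using map_dvd (algebraMap R B) hqh
  obtain ⟨b', hb'⟩ := hcond b
  have hqhr : q ∣ h * r := ⟨b', FaithfulSMul.algebraMap_injective R B <| by
    rw [map_mul, map_mul, hb', hb, mul_left_comm]⟩
  simp only [← Ideal.mem_span_singleton] at hqhr hqh ⊢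
  exact (hq.mem_or_mem hqhr).resolve_left hqh

lemma isPrime_span_algebraMap_of_conductor [FaithfulSMul R B] [Algebra.IsIntegral R B]
    (hh : IsSMulRegular B (algebraMap R B h))
    (hcond : ∀ b, algebraMap R B h * b ∈ (algebraMap R B).range)
    (hreg : IsSMulRegular (B ⧸ Ideal.span {algebraMap R B h}) (algebraMap R B q))
    (hq : (Ideal.span {q}).IsPrime) :
    (Ideal.span {algebraMap R B q}).IsPrime := by
  have hiff {r : R} := algebraMap_dvd_algebraMap_iff_of_conductor hh hcond hreg hq (r := r)
  refine Ideal.isPrime_iff.2 ⟨?_, fun {u v} huv => ?_⟩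
  · rw [Ideal.ne_top_iff_one, Ideal.mem_span_singleton, ← map_one (algebraMap R B), hiff,
      ← Ideal.mem_span_singleton]
    exact hq.one_notMem
  · obtain ⟨u', hu'⟩ := hcond u
    obtain ⟨v', hv'⟩ := hcond v
    simp only [Ideal.mem_span_singleton] at huv ⊢
    have huv' : q ∣ u' * v' := by
      rw [← hiff, map_mul, hu', hv', mul_mul_mul_comm]
      exact huv.mul_left _
    have hdvd {w : B} {w' : R} (hw : algebraMap R B w' = algebraMap R B h * w) (hqw : q ∣ w') :
        algebraMap R B q ∣ w :=
      dvd_of_dvd_mul_of_isSMulRegular hh hreg (hw ▸ map_dvd _ hqw)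
    simp only [← Ideal.mem_span_singleton] at huv'
    exact (hq.mem_or_mem huv').imp (hdvd hu' <| Ideal.mem_span_singleton.1 ·)
      (hdvd hv' <| Ideal.mem_span_singleton.1 ·)

end Conductor

section Monogenic

variable {A B : Type*} [CommRing A] [IsDomain A] [IsIntegrallyClosed A] [CommRing B] [IsDomain B]
  [Algebra A B] [FaithfulSMul A B] [Algebra.IsIntegral A B] {θ h : B} {c : A}

lemma isPrime_and_liesOver_of_mem_conductor (hh0 : h ≠ 0) (hh : h ∈ conductor A θ)
    (hreg : IsSMulRegular (B ⧸ Ideal.span {h}) (θ - algebraMap A B c))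
    (hc : (Ideal.span {(minpoly A θ).eval c}).IsPrime) :
    (Ideal.span {θ - algebraMap A B c}).IsPrime ∧
      (Ideal.span {θ - algebraMap A B c}).LiesOver (Ideal.span {(minpoly A θ).eval c}) := by
  let R := Algebra.adjoin A {θ}
  let hadj : IsAdjoinRoot R (minpoly A θ) := (AdjoinRoot.isAdjoinRoot (minpoly A θ)).ofAlgEquiv
    (minpoly.equivAdjoin (Algebra.IsIntegral.isIntegral θ))
  let q : R := hadj.root - algebraMap A R c
  have hqB : θ - algebraMap A B c = algebraMap R B q := by simp [q, hadj, R]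
  obtain ⟨h, rfl⟩ : ∃ h' : R, algebraMap R B h' = h := ⟨⟨h, conductor_subset_adjoin hh⟩, rfl⟩
  have hcond (b : B) : algebraMap R B h * b ∈ (algebraMap R B).range :=
    ⟨⟨_, mem_conductor_iff.1 hh b⟩, rfl⟩
  have hq : (Ideal.span {q}).IsPrime := isPrime_span_root_sub_algebraMap hadj hc
  have : Algebra.IsIntegral R B := Algebra.IsIntegral.tower_top A
  have hhreg : IsSMulRegular B (algebraMap R B h) := IsSMulRegular.of_ne_zero hh0
  rw [hqB] at hreg ⊢
  refine ⟨isPrime_span_algebraMap_of_conductor hhreg hcond hreg hq, ⟨Ideal.ext fun a => ?_⟩⟩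
  rw [Ideal.mem_comap, Ideal.mem_span_singleton, Ideal.mem_span_singleton,
    IsScalarTower.algebraMap_apply A R B,
    algebraMap_dvd_algebraMap_iff_of_conductor hhreg hcond hreg hq, hadj.algebraMap_apply,
    root_sub_algebraMap_dvd_map_iff, Polynomial.eval_C]

end Monogenic

section PrimitiveElement

lemma conductor_ne_bot_of_adjoin_eq_top {A B : Type*} (E : Type*) {F : Type*} [CommRing A]
    [IsDomain A] [CommRing B] [Field E] [Field F] [Algebra A B] [Algebra A E] [Algebra A F]
    [Algebra B F] [Algebra E F] [IsScalarTower A B F] [IsScalarTower A E F] [IsFractionRing A E]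
    [FaithfulSMul A B] [FaithfulSMul B F] [Module.Finite A B] {θ : B}
    (hθ : Algebra.adjoin E {algebraMap B F θ} = ⊤) : conductor A θ ≠ ⊥ := by
  have hden (b : B) : ∃ a ∈ nonZeroDivisors A, a • b ∈ Algebra.adjoin A {θ} := by
    obtain ⟨f, hf⟩ : ∃ f : Polynomial E, Polynomial.aeval (algebraMap B F θ) f = algebraMap B F b :=
      Algebra.adjoin_mem_exists_aeval _ _ (hθ ▸ Algebra.mem_top)
    obtain ⟨a, ha, hfa⟩ := IsLocalization.integerNormalization_spec (nonZeroDivisors A) f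
    refine ⟨a, ha, ?_⟩
    convert Polynomial.aeval_mem_adjoin_singleton A θ
      (p := IsLocalization.integerNormalization (nonZeroDivisors A) f)
    apply FaithfulSMul.algebraMap_injective B F
    have hab : algebraMap B F (a • b) = a • algebraMap B F b :=
      map_smul (IsScalarTower.toAlgHom A B F) a b
    rw [hab, ← hf, ← Polynomial.aeval_algebraMap_apply, ← algebraMap_smul E a, ← map_smul,
      algebraMap_smul, ← hfa, Polynomial.aeval_map_algebraMap]
  have htors : Module.IsTorsion A (B ⧸ (Algebra.adjoin A {θ}).toSubmodule) := by
    intro x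
    obtain ⟨b, rfl⟩ := Submodule.Quotient.mk_surjective _ x
    obtain ⟨a, ha, hab⟩ := hden b
    exact ⟨⟨a, ha⟩, (Submodule.Quotient.mk_eq_zero _).2 hab⟩
  obtain ⟨a, ha, ha0⟩ := Submodule.annihilator_top_inter_nonZeroDivisors htors
  refine (Submodule.ne_bot_iff _).2 ⟨algebraMap A B a, mem_conductor_iff.2 fun b => ?_, ?_⟩
  · rw [← Algebra.smul_def, ← Subalgebra.mem_toSubmodule, ← Submodule.Quotient.mk_eq_zero]
    exact Submodule.mem_annihilator.1 ha (Submodule.Quotient.mk b) trivial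
  · simpa using nonZeroDivisors.ne_zero ha0

lemma finite_setOf_not_isSMulRegular_sub {K B M : Type*} [Field K] [CommRing B]
    [IsNoetherianRing B] [Algebra K B] [AddCommGroup M] [Module B M] [Module.Finite B M]
    (θ : B) : {c : K | ¬ IsSMulRegular M (θ - algebraMap K B c)}.Finite := by
  have hsub : {c : K | ¬ IsSMulRegular M (θ - algebraMap K B c)} =
      ⋃ p ∈ associatedPrimes B M, {c : K | θ - algebraMap K B c ∈ p} := by
    ext c
    simpa using (Set.ext_iff.1 (biUnion_associatedPrimes_eq_compl_regular B M)
      (θ - algebraMap K B c)).symm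
  rw [hsub]
  refine (associatedPrimes.finite B M).biUnion fun p hp => Set.Subsingleton.finite ?_
  intro c hc c' hc'
  have : p.IsPrime := IsAssociatedPrime.isPrime hp
  apply FaithfulSMul.algebraMap_injective K (B ⧸ p)
  simp only [IsScalarTower.algebraMap_apply K B (B ⧸ p)]
  exact ((Ideal.Quotient.eq.2 hc).symm.trans (Ideal.Quotient.eq.2 hc'))

end PrimitiveElement

section Hilbertian

variable {K : Type} [Field K]

lemma IsZariskiDense.mono {ι : Type} {S T : Set (ι → K)} (hS : IsZariskiDense K S) (hST : S ⊆ T) :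
    IsZariskiDense K T := fun g hg => (hS g hg).imp fun _ ht => ⟨hST ht.1, ht.2⟩

lemma IsZariskiDense.infinite_image_apply {ι : Type} {S : Set (ι → K)} (hS : IsZariskiDense K S)
    (i : ι) : ((fun t => t i) '' S).Infinite := by
  intro hfin
  obtain ⟨t, htS, ht⟩ := hS (∏ c ∈ hfin.toFinset, (X i - C c)) <|
    Finset.prod_ne_zero_iff.2 fun c _ h => by simpa using congrArg (eval fun _ => c + 1) h
  rw [map_prod, Finset.prod_ne_zero_iff] at ht
  exact ht (t i) (hfin.mem_toFinset.2 ⟨t, htS, rfl⟩) (by simp)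

lemma PolySpecializesTo.eq_map_eval {ι : Type} {s : ℕ} {t : ι → K}
    {P : MvPolynomial (Fin s) (MvPolynomial ι K)} {q : MvPolynomial (Fin s) K}
    (h : PolySpecializesTo K t (map (algebraMap _ (RatFuncField K ι)) P) q) :
    q = map (eval t) P := by
  ext m
  obtain ⟨a, b, hb, hab, hq⟩ := h m
  rw [coeff_map, ← map_mul] at hab
  rw [← IsFractionRing.injective _ (RatFuncField K ι) hab, map_mul] at hq
  rw [coeff_map]
  exact mul_left_cancel₀ hb hq

lemma prime_map_algebraMap_of_notMem_range_C {R F σ : Type*} [CommRing R] [IsDomain R] [Field F]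
    [Algebra R F] [IsFractionRing R F] {P : MvPolynomial σ R} (hP : Prime P)
    (hPC : P ∉ Set.range C) : Prime (map (algebraMap R F) P) := by
  let := algebraMvPolynomial (R := R) (S := F) (σ := σ)
  let S : Submonoid (MvPolynomial σ R) := (nonZeroDivisors R).map C
  have hdisj : Disjoint (S : Set (MvPolynomial σ R)) (Ideal.span {P} : Ideal _) := by
    rw [Set.disjoint_left]
    rintro _ ⟨r, hr, rfl⟩ hmem
    obtain ⟨k, hk⟩ := Ideal.mem_span_singleton.1 hmem
    have hPk : P * k ≠ 0 := hk ▸ (C_ne_zero.2 (nonZeroDivisors.ne_zero hr))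
    have hdeg := totalDegree_mul_of_isDomain (left_ne_zero_of_mul hPk) (right_ne_zero_of_mul hPk)
    rw [← hk] at hdeg
    have hP0 : P.totalDegree = 0 := by
      have : (C r : MvPolynomial σ R).totalDegree = 0 := totalDegree_C r
      omega
    exact hPC ⟨_, (totalDegree_eq_zero_iff_eq_C.1 hP0).symm⟩
  have hprime := IsLocalization.isPrime_of_isPrime_disjoint S (MvPolynomial σ F) (Ideal.span {P})
    ((Ideal.span_singleton_prime hP.ne_zero).2 hP) hdisj
  rw [Ideal.map_span, Set.image_singleton] at hprime
  refine (Ideal.span_singleton_prime ?_).1 hprime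
  exact (map_ne_zero_iff _ <| map_injective _ <| IsFractionRing.injective R F).2 hP.ne_zero

lemma IsHilbertianField.isZariskiDense_setOf_irreducible_map_eval (hK : IsHilbertianField K)
    {r s : ℕ} (hr : 0 < r) {P : MvPolynomial (Fin s) (MvPolynomial (Fin r) K)} (hP : Prime P)
    (hPC : P ∉ Set.range C) : IsZariskiDense K {t | Irreducible (map (eval t) P)} := by
  have hPirr := (prime_map_algebraMap_of_notMem_range_C (F := RatFuncField K (Fin r)) hP
    hPC).irreducible
  refine (hK r hr _ ⟨s, 1, 1, fun _ => _, fun _ => 1, fun _ => hPirr, ⟨0, 0, by simp⟩, rfl⟩).mono ?_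
  rintro t ⟨-, ht⟩
  obtain ⟨q, hq, hqirr⟩ := ht 0
  rwa [hq.eq_map_eval] at hqirr

lemma map_eval_commAlgEquiv {R σ τ : Type*} [CommRing R] (t : σ → R)
    (M : MvPolynomial σ (MvPolynomial τ R)) :
    map (eval t) (commAlgEquiv R σ τ M) = eval (C ∘ t) M := by
  induction M using MvPolynomial.induction_on with
  | C p =>
    have : (eval t).comp C = RingHom.id R := by ext; simp
    simp [map_map, this, map_id]
  | add M N hM hN => simp only [map_add, hM, hN]
  | mul_X M i hM => simp [hM]

lemma commAlgEquiv_map_C {R σ τ : Type*} [CommRing R] (f : MvPolynomial σ R) :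
    commAlgEquiv R σ τ (map C f) = C f := by
  induction f using MvPolynomial.induction_on with
  | C r => simp
  | add f g hf hg => simp only [map_add, hf, hg]
  | mul_X f i hf => simp [hf]

lemma eval_uniqueAlgEquiv_symm {R σ : Type*} [CommRing R] [Unique σ] (c : σ → R)
    (m : Polynomial R) : eval c ((uniqueAlgEquiv R σ).symm m) = m.eval (c default) := by
  induction m using Polynomial.induction_on' with
  | add p q hp hq => simp_all
  | monomial n r => simp

lemma IsHilbertianField.infinite_setOf_irreducible_eval (hK : IsHilbertianField K) {d : ℕ}
    {m : Polynomial (MvPolynomial (Fin d) K)} (hm : Prime m)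
    (hmC : ∀ f : Polynomial K, f.map C ≠ m) : {c : K | Irreducible (m.eval (C c))}.Infinite := by
  let e := (uniqueAlgEquiv (MvPolynomial (Fin d) K) (Fin 1)).symm
  let M := e m
  have hM : Prime (commAlgEquiv K (Fin 1) (Fin d) M) :=
    (MulEquiv.prime_iff (commAlgEquiv K (Fin 1) (Fin d))).2 ((MulEquiv.prime_iff e).2 hm)
  have hMC : commAlgEquiv K (Fin 1) (Fin d) M ∉ Set.range C := by
    rintro ⟨f, hf⟩
    rw [← commAlgEquiv_map_C] at hf
    have hfm : e.symm (map C f) = m :=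
      e.symm_apply_eq.2 ((commAlgEquiv K (Fin 1) (Fin d)).injective hf)
    refine hmC (uniqueAlgEquiv K (Fin 1) f) (Eq.trans ?_ hfm)
    ext : 1
    simp only [e, AlgEquiv.symm_symm, Polynomial.coeff_map, coeff_uniqueAlgEquiv, coeff_map]
  have hdense := hK.isZariskiDense_setOf_irreducible_map_eval one_pos hM hMC
  refine (hdense.infinite_image_apply 0).mono ?_
  rintro _ ⟨t, ht, rfl⟩
  rwa [Set.mem_ofPred_eq, map_eval_commAlgEquiv, eval_uniqueAlgEquiv_symm] at ht

end Hilbertian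

section GenericPolynomial

lemma exists_eval_ne_zero_and_forall_notMem {K ι τ : Type*} [Field K] [Infinite K] [Finite ι]
    [Finite τ] {g : MvPolynomial ι K} (hg : g ≠ 0) {W : τ → Submodule K (ι → K)}
    (hW : ∀ i, W i ≠ ⊤) : ∃ x, eval x g ≠ 0 ∧ ∀ i, x ∉ W i := by
  have := Fintype.ofFinite ι
  have := Fintype.ofFinite τ
  classical
  have hform (i : τ) : ∃ p : MvPolynomial ι K, p ≠ 0 ∧ ∀ x ∈ W i, eval x p = 0 := by
    obtain ⟨φ, hφ, hWφ⟩ := Submodule.exists_le_ker_of_lt_top (W i) (lt_top_iff_ne_top.2 (hW i))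
    have heval (x : ι → K) : eval x (∑ j, C (φ fun k => if j = k then 1 else 0) * X j) = φ x := by
      simp [φ.pi_apply_eq_sum_univ x, mul_comm]
    refine ⟨_, fun h0 => hφ (LinearMap.ext fun x => ?_), fun x hx => (heval x).trans (hWφ hx)⟩
    rw [← heval, h0, map_zero, LinearMap.zero_apply]
  choose p hp0 hpW using hform
  obtain ⟨x, hx⟩ : ∃ x, eval x (g * ∏ i, p i) ≠ 0 := by
    by_contra! h
    exact mul_ne_zero hg (Finset.prod_ne_zero_iff.2 fun i _ => hp0 i)
      (MvPolynomial.funext fun x => by rw [h, map_zero])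
  rw [map_mul, map_prod, mul_ne_zero_iff, Finset.prod_ne_zero_iff] at hx
  exact ⟨x, hx.1, fun i hi => hx.2 i (Finset.mem_univ i) (hpW i x hi)⟩

lemma finite_setOf_eval_sub_smul_eq_zero {K ι : Type*} [Field K] {g : MvPolynomial ι K}
    {u : ι → K} (hu : eval u g ≠ 0) (v : ι → K) : {c : K | eval (u - c • v) g = 0}.Finite := by
  let f : Polynomial K := aeval (fun i => Polynomial.C (u i) - Polynomial.C (v i) * Polynomial.X) g
  have hf (c : K) : f.eval c = eval (u - c • v) g := by
    rw [← Polynomial.coe_evalRingHom, map_aeval, eval]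
    congr 1
    ext <;> simp [mul_comm c]
  have hf0 : f ≠ 0 := fun h => hu (by simpa [h] using (hf 0).symm)
  simpa only [← hf, Polynomial.IsRoot] using Polynomial.finite_setOfPred_isRoot hf0

variable {K : Type} [Field K] {s D : ℕ}

variable (K s D) in
/-- The generic polynomial `Q_D(λ, Y)` as a linear function of its coefficient vector `λ`. -/
def genPolyAtLinearMap : (MonLE s D → K) →ₗ[K] MvPolynomial (Fin s) K :=
  ∑ m : MonLE s D, monomial m.1 ∘ₗ LinearMap.proj m

lemma genPolyAtLinearMap_apply (lam : MonLE s D → K) :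
    genPolyAtLinearMap K s D lam = genPolyAt K s D lam := by
  simp [genPolyAtLinearMap, genPolyAt]

lemma genPolyAt_single [DecidableEq (MonLE s D)] (m : MonLE s D) (c : K) :
    genPolyAt K s D (Pi.single m c) = monomial m.1 c := by
  rw [genPolyAt, Finset.sum_eq_single_of_mem m (Finset.mem_univ m) fun i _ hi => by
    rw [Pi.single_eq_of_ne hi, map_zero], Pi.single_eq_same]

lemma exists_eval_ne_zero_and_forall_genPolyAt_notMem [Infinite K] {L τ : Type*} [CommRing L]
    [Algebra K L] [Finite τ] (ψ : MvPolynomial (Fin s) K →ₐ[K] L) (hD : 1 ≤ D)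
    {S : τ → Subalgebra K L} (hS : ∀ i, ¬ ψ.range ≤ S i) {g : MvPolynomial (MonLE s D) K}
    (hg : g ≠ 0) : ∃ lam, eval lam g ≠ 0 ∧ ∀ i, ψ (genPolyAt K s D lam) ∉ S i := by
  classical
  simp only [← genPolyAtLinearMap_apply]
  refine exists_eval_ne_zero_and_forall_notMem hg
    (W := fun i => (S i).toSubmodule.comap (ψ.toLinearMap ∘ₗ genPolyAtLinearMap K s D))
    fun i hi => hS i ?_
  rw [← Algebra.map_top, ← adjoin_range_X, AlgHom.map_adjoin, Algebra.adjoin_le_iff]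
  have hmem (m : MonLE s D) : ψ (monomial m.1 1) ∈ S i := by
    rw [← genPolyAt_single, ← genPolyAtLinearMap_apply]
    exact Submodule.eq_top_iff'.1 hi _
  rintro _ ⟨_, ⟨j, rfl⟩, rfl⟩
  exact hmem ⟨Finsupp.single j 1, by simpa using hD⟩

lemma exists_eval_ne_zero_and_genPolyAt_primitive [CharZero K] {B : Type*} (E F : Type*)
    [CommRing B] [Field E] [Field F] [Algebra K B] [Algebra K E] [Algebra K F] [Algebra B F]
    [Algebra E F] [IsScalarTower K B F] [IsScalarTower K E F] [IsFractionRing B F]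
    [FiniteDimensional E F] (hB : ¬ Algebra.IsIntegral K B)
    {y : MvPolynomial (Fin s) K →ₐ[K] B} (hy : Function.Surjective y) (hD : 1 ≤ D)
    {g : MvPolynomial (MonLE s D) K} (hg : g ≠ 0) :
    ∃ lam, eval lam g ≠ 0 ∧ ¬ IsIntegral K (y (genPolyAt K s D lam)) ∧
      Algebra.adjoin E {algebraMap B F (y (genPolyAt K s D lam))} = ⊤ := by
  let ψ := (IsScalarTower.toAlgHom K B F).comp y
  have : CharZero E := charZero_of_injective_algebraMap (algebraMap K E).injective
  have hfin : Finite (IntermediateField E F) :=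
    Field.finite_intermediateField_of_exists_primitive_element E F
      (Field.exists_primitive_element E F)
  have hrange {S : Subalgebra K F} (hS : ψ.range ≤ S) (b : B) : algebraMap B F b ∈ S := by
    obtain ⟨p, rfl⟩ := hy b
    exact hS ⟨p, rfl⟩
  have hint : ¬ ψ.range ≤ integralClosure K F := fun hS => hB ⟨fun b =>
    (isIntegral_algebraMap_iff (IsFractionRing.injective B F)).1 (hrange hS b)⟩
  have hproper (M : {M : IntermediateField E F // M ≠ ⊤}) :
      ¬ ψ.range ≤ M.1.toSubalgebra.restrictScalars K := by
    refine fun hS => M.2 (eq_top_iff.2 fun x _ => ?_)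
    obtain ⟨a, b, -, rfl⟩ := IsFractionRing.div_surjective (A := B) x
    exact div_mem (hrange hS a) (hrange hS b)
  obtain ⟨lam, hlam, hnotMem⟩ := exists_eval_ne_zero_and_forall_genPolyAt_notMem ψ hD
    (S := fun o : Option {M : IntermediateField E F // M ≠ ⊤} =>
      o.elim (integralClosure K F) fun M => M.1.toSubalgebra.restrictScalars K)
    (Option.forall.2 ⟨hint, hproper⟩) hg
  refine ⟨lam, hlam, fun h => hnotMem none h.algebraMap, ?_⟩
  rw [← IntermediateField.adjoin_simple_toSubalgebra_of_isAlgebraic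
    (Algebra.IsAlgebraic.isAlgebraic _)]
  by_contra hne
  let M := IntermediateField.adjoin E {algebraMap B F (y (genPolyAt K s D lam))}
  refine hnotMem (some ⟨M, fun hM => hne ?_⟩) (IntermediateField.mem_adjoin_simple_self E _)
  simp [M, hM]

lemma exists_eval_ne_zero_and_conductor_genPolyAt_ne_bot [CharZero K] (A : Type*) {B : Type*}
    [CommRing A] [IsDomain A] [CommRing B] [IsDomain B] [Algebra K A] [Algebra K B] [Algebra A B]
    [IsScalarTower K A B] [Module.Finite A B] [FaithfulSMul A B]
    (hB : ¬ Algebra.IsIntegral K B) {y : MvPolynomial (Fin s) K →ₐ[K] B}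
    (hy : Function.Surjective y) (hD : 1 ≤ D) {g : MvPolynomial (MonLE s D) K} (hg : g ≠ 0) :
    ∃ lam, eval lam g ≠ 0 ∧ ¬ IsIntegral K (y (genPolyAt K s D lam)) ∧
      conductor A (y (genPolyAt K s D lam)) ≠ ⊥ := by
  let E := FractionRing A
  let F := FractionRing B
  let : Algebra E F := FractionRing.liftAlgebra A F
  have : IsScalarTower K E F := .of_algebraMap_eq fun x => by
    rw [IsScalarTower.algebraMap_apply K A E, ← IsScalarTower.algebraMap_apply A E F,
      ← IsScalarTower.algebraMap_apply K A F]
  have : FiniteDimensional E F := .of_isLocalization A B (nonZeroDivisors A)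
  obtain ⟨lam, hlam, hint, hprim⟩ :=
    exists_eval_ne_zero_and_genPolyAt_primitive E F hB hy hD hg
  exact ⟨lam, hlam, hint, conductor_ne_bot_of_adjoin_eq_top E hprim⟩

end GenericPolynomial

section HypersurfaceSection

lemma infinite_setOf_isPrime_and_ringKrullDim_quotient {K : Type} {B : Type*} [Field K]
    [CommRing B] [IsDomain B] {d : ℕ} [Algebra (MvPolynomial (Fin d) K) B] [Algebra K B]
    [IsScalarTower K (MvPolynomial (Fin d) K) B] [Module.Finite (MvPolynomial (Fin d) K) B]
    [FaithfulSMul (MvPolynomial (Fin d) K) B] (hK : IsHilbertianField K) {θ : B}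
    (hθ : ¬ IsIntegral K θ) (hcond : conductor (MvPolynomial (Fin d) K) θ ≠ ⊥) :
    {c : K | (Ideal.span {θ - algebraMap K B c}).IsPrime ∧
      ringKrullDim (B ⧸ Ideal.span {θ - algebraMap K B c}) + 1 = (d : WithBot ℕ∞)}.Infinite := by
  have hint : IsIntegral (MvPolynomial (Fin d) K) θ := Algebra.IsIntegral.isIntegral θ
  have : IsNoetherianRing B := IsNoetherianRing.of_finite (MvPolynomial (Fin d) K) B
  obtain ⟨h, hh, hh0⟩ := Submodule.exists_mem_ne_zero_of_ne_bot hcond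
  have hconst (f : Polynomial K) : f.map C ≠ minpoly (MvPolynomial (Fin d) K) θ := fun hf => by
    refine hθ ⟨f, Polynomial.monic_of_injective (C_injective _ K) (hf ▸ minpoly.monic hint), ?_⟩
    rw [IsScalarTower.algebraMap_eq K (MvPolynomial (Fin d) K) B, ← Polynomial.eval₂_map,
      algebraMap_eq, hf]
    exact minpoly.aeval _ θ
  refine ((hK.infinite_setOf_irreducible_eval (minpoly.prime_of_isIntegrallyClosed hint)
    hconst).sdiff (finite_setOf_not_isSMulRegular_sub (M := B ⧸ Ideal.span {h}) θ)).mono ?_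
  rintro c ⟨hirr : Irreducible _, hreg⟩
  have hreg := not_not.1 hreg
  rw [Set.mem_ofPred_eq]
  rw [IsScalarTower.algebraMap_apply K (MvPolynomial (Fin d) K) B, algebraMap_eq] at hreg ⊢
  obtain ⟨hprime, hover⟩ := isPrime_and_liesOver_of_mem_conductor hh0 hh hreg
    ((Ideal.span_singleton_prime hirr.ne_zero).2 hirr.prime)
  refine ⟨hprime, ?_⟩
  rw [ringKrullDim_quotient_of_liesOver _
      (Ideal.span {(minpoly (MvPolynomial (Fin d) K) θ).eval (C c)}),
    ringKrullDim_quotient_span_singleton_add_one hirr.ne_zero hirr.not_isUnit, Nat.card_fin]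

lemma isZariskiDense_setOf_isPrime_and_ringKrullDim_quotient {K : Type} {B : Type*} [Field K]
    [CharZero K] (hK : IsHilbertianField K) [CommRing B] [IsDomain B] [Algebra K B] {s D d : ℕ}
    (hD : 1 ≤ D) {y : MvPolynomial (Fin s) K →ₐ[K] B} (hy : Function.Surjective y)
    (hd : ringKrullDim B = d) (hd0 : 0 < d) :
    IsZariskiDense K {lam | (Ideal.span {y (genPolyAt K s D lam)}).IsPrime ∧
      ringKrullDim (B ⧸ Ideal.span {y (genPolyAt K s D lam)}) + 1 = (d : WithBot ℕ∞)} := by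
  classical
  intro g hg
  have : Algebra.FiniteType K B := .of_surjective y hy
  obtain ⟨φ, hinj, hfin⟩ := exists_finite_injective_algHom_of_ringKrullDim_eq (K := K) hd
  algebraize [φ.toRingHom]
  have : Module.Finite (MvPolynomial (Fin d) K) B := hfin
  have : IsScalarTower K (MvPolynomial (Fin d) K) B := .of_algHom φ
  have : FaithfulSMul (MvPolynomial (Fin d) K) B :=
    (faithfulSMul_iff_algebraMap_injective _ _).2 hinj
  have hB : ¬ Algebra.IsIntegral K B := fun _ => by
    rw [ringKrullDim_eq_of_isIntegral_of_injective (FaithfulSMul.algebraMap_injective K B),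
      ringKrullDim_eq_zero_of_field] at hd
    exact hd0.ne (by exact_mod_cast hd)
  obtain ⟨lam, hlam, hint, hcond⟩ :=
    exists_eval_ne_zero_and_conductor_genPolyAt_ne_bot (MvPolynomial (Fin d) K) hB hy hD hg
  let v : MonLE s D → K := Pi.single ⟨0, by simp⟩ 1
  obtain ⟨c, hc, hgc⟩ := ((infinite_setOf_isPrime_and_ringKrullDim_quotient hK hint
    hcond).sdiff (finite_setOf_eval_sub_smul_eq_zero hlam v)).nonempty
  have hsub : y (genPolyAt K s D (lam - c • v)) = y (genPolyAt K s D lam) - algebraMap K B c := by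
    have hv : genPolyAt K s D v = 1 := genPolyAt_single _ 1
    rw [← genPolyAtLinearMap_apply] at hv ⊢
    rw [map_sub, map_smul, hv, genPolyAtLinearMap_apply, map_sub, map_smul, map_one,
      Algebra.algebraMap_eq_smul_one]
  exact ⟨lam - c • v, by rwa [Set.mem_ofPred_eq, hsub], hgc⟩

end HypersurfaceSection

/-- `K` Hilbertian of characteristic `0`, `p = ⟨P_1,…,P_l⟩ ⊆ K[Y]` prime
with `dim K[Y]/p = d > 0`, `D ≥ 1`.  The set of `λ ∈ K^{N_D}` such that the ideal
`⟨P_1,…,P_l, Q_D(λ,Y)⟩` of `K[Y]` is prime with quotient of Krull dimension `d − 1` is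
Zariski-dense in `K^{N_D}`. -/
theorem stmt_10 (K : Type) [Field K] [CharZero K] (hK : IsHilbertianField K)
    (s l : ℕ) (hl : 1 ≤ l) (P : Fin l → MvPolynomial (Fin s) K)
    (hp : (Ideal.span (Set.range P)).IsPrime)
    (d : ℕ) (hd0 : 0 < d)
    (hd : ringKrullDim (MvPolynomial (Fin s) K ⧸ Ideal.span (Set.range P)) = (d : WithBot ℕ∞))
    (D : ℕ) (hD : 1 ≤ D) :
    IsZariskiDense K {lam : MonLE s D → K |
      (Ideal.span (Set.range P ∪ {genPolyAt K s D lam})).IsPrime ∧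
      ringKrullDim (MvPolynomial (Fin s) K ⧸
        Ideal.span (Set.range P ∪ {genPolyAt K s D lam})) = ((d - 1 : ℕ) : WithBot ℕ∞)} := by
  intro g hg
  obtain ⟨lam, ⟨hprime, hdim⟩, hlam⟩ :=
    isZariskiDense_setOf_isPrime_and_ringKrullDim_quotient hK hD
      (Ideal.Quotient.mkₐ_surjective K (Ideal.span (Set.range P))) hd hd0 g hg
  rw [Ideal.Quotient.mkₐ_eq_mk, ← Set.image_singleton, ← Ideal.map_span] at hprime hdim
  rw [isPrime_map_quotientMk_iff, ← Ideal.span_union] at hprime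
  rw [ringKrullDim_quotient_map_quotientMk, ← Ideal.span_union] at hdim
  refine ⟨lam, ⟨hprime, ENat.WithBot.add_one_cancel.1 (hdim.trans ?_)⟩, hlam⟩
  exact_mod_cast (Nat.sub_add_cancel hd0).symm

end
end
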